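/- arXiv:1710.03815 — 4 statements merged into one kernel-verified Lean document; each statement's English description precedes it below -/
import Mathlib

section
/- For all integers t and n with 1 ≤ t < n, the maximum size of an n-dimensional matroid with no PG(t,2)-restriction equals 2ⁿ(1 − 2^{−t}); that is, ex({PG(t,2)}, n) = 2ⁿ(1 − 2^{−t}). -/
open scoped Classical

/-- `M` has an `N`-restriction: some injective linear image of `N` lies inside `M`. -/
def HasRestriction {α β : Type*} [AddCommMonoid α] [AddCommMonoid β]
    [Module (ZMod 2) α] [Module (ZMod 2) β] (N : Set α) (M : Set β) : Prop :=
  ∃ ψ : α →ₗ[ZMod 2] β, Function.Injective ψ ∧ ψ '' N ⊆ M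

/-- The set of distinct `N`-restrictions of `M` (as subsets of `M`). -/
def restrictionSet {α β : Type*} [AddCommMonoid α] [AddCommMonoid β]
    [Module (ZMod 2) α] [Module (ZMod 2) β] (N : Set α) (M : Set β) : Set (Set β) :=
  {S | S ⊆ M ∧ ∃ ψ : α →ₗ[ZMod 2] β, Function.Injective ψ ∧ S = ψ '' N}

/-- The Turán number for a single excluded matroid `N`. -/
noncomputable def exNum {α : Type*} [AddCommMonoid α] [Module (ZMod 2) α] (N : Set α) (n : ℕ) : ℕ :=
  sSup {m | ∃ M : Set (Fin n → ZMod 2), 0 ∉ M ∧ ¬ HasRestriction N M ∧ M.ncard = m}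

/-- The Turán number for a family of excluded matroids. -/
noncomputable def exNumFam (𝒩 : Set (Σ k : ℕ, Set (Fin k → ZMod 2))) (n : ℕ) : ℕ :=
  sSup {m | ∃ M : Set (Fin n → ZMod 2), 0 ∉ M ∧
    (∀ N ∈ 𝒩, ¬ HasRestriction N.2 M) ∧ M.ncard = m}

/-- The critical number of `M ⊆ 𝔽₂ⁿ`. -/
noncomputable def critNum {n : ℕ} (M : Set (Fin n → ZMod 2)) : ℕ :=
  sInf {c | ∃ φ : (Fin n → ZMod 2) →ₗ[ZMod 2] (Fin c → ZMod 2), ∀ x ∈ M, φ x ≠ 0}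

/-- The rank of `M`: dimension of its span. -/
noncomputable def rankM {n : ℕ} (M : Set (Fin n → ZMod 2)) : ℕ :=
  Module.finrank (ZMod 2) (Submodule.span (ZMod 2) M)

/-- `M` is a copy of `N^{n,t}`. -/
def IsCopyNnt {d : ℕ} (N : Set (Fin d → ZMod 2)) (n t : ℕ)
    (M : Set (Fin n → ZMod 2)) : Prop :=
  ∃ F : Submodule (ZMod 2) (Fin n → ZMod 2), Module.finrank (ZMod 2) F = n - t ∧
    ∃ θ : (Fin d → ZMod 2) →ₗ[ZMod 2] (Fin n → ZMod 2),
      Function.Injective θ ∧ (∀ x, θ x ∈ F) ∧ M = θ '' N ∪ {x | x ∉ F}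

/-- The decomposition family `𝒟(𝒩)`. -/
def decompFam (𝒩 : Set (Σ k : ℕ, Set (Fin k → ZMod 2))) (k : ℕ) :
    Set (Σ k : ℕ, Set (Fin k → ZMod 2)) :=
  {D | 0 ∉ D.2 ∧
    (∃ N ∈ 𝒩, ∃ M : Set (Fin N.1 → ZMod 2), IsCopyNnt D.2 N.1 k M ∧ HasRestriction N.2 M) ∧
    ∀ D' : Σ k : ℕ, Set (Fin k → ZMod 2), 0 ∉ D'.2 →
      (∃ N ∈ 𝒩, ∃ M : Set (Fin N.1 → ZMod 2), IsCopyNnt D'.2 N.1 k M ∧ HasRestriction N.2 M) →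
      HasRestriction D'.2 D.2 → HasRestriction D.2 D'.2}

/-- The cycle matroid of a simple graph. -/
def cycleMatroid {V : Type*} [DecidableEq V] (G : SimpleGraph V) : Set (V → ZMod 2) :=
  {x | ∃ u v, G.Adj u v ∧ x = Pi.single u 1 + Pi.single v 1}

/-!
In `𝔽_qⁿ`, the complement of a subspace of codimension `t` contains no `PG(t, q)`, because a
subspace of dimension `t + 1` meets every subspace of codimension `t` nontrivially.

Conversely, let `M` be closed under nonzero scalars, with fewer than `q ^ (n - t)` vectors outside
it. A subspace `W` of dimension at most `t` whose nonzero vectors all lie in `M` can be enlarged: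
the translates of `Mᶜ` by the vectors of `W` cover fewer than `q ^ n` vectors, and any uncovered
vector can be adjoined to `W`. Starting from the zero subspace, `t + 1` enlargements produce a
`PG(t, q)` in `M`.
-/

/-- The projective geometry `PG(d - 1, q)` occurs in `M`: all nonzero vectors of some
`d`-dimensional subspace lie in `M`. The rank `d` is used as parameter instead of the projective
dimension `d - 1`. -/
def ContainsPG (K : Type*) {V : Type*} [Field K] [AddCommGroup V] [Module K V] (d : ℕ)
    (M : Set V) : Prop :=
  ∃ W : Submodule K V, Module.finrank K W = d ∧ (W : Set V) \ {0} ⊆ M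

theorem hasRestriction_setOf_ne_zero_iff {V : Type*} [AddCommGroup V] [Module (ZMod 2) V]
    [FiniteDimensional (ZMod 2) V] {d : ℕ} {M : Set V} :
    HasRestriction {x : Fin d → ZMod 2 | x ≠ 0} M ↔ ContainsPG (ZMod 2) d M := by
  constructor
  · rintro ⟨ψ, hψ, hM⟩
    refine ⟨ψ.range, by simp [LinearMap.finrank_range_of_inj hψ], ?_⟩
    rintro _ ⟨⟨x, rfl⟩, hx⟩
    exact hM ⟨x, fun h => hx (by simp [h]), rfl⟩
  · rintro ⟨W, hW, hM⟩
    let e : (Fin d → ZMod 2) ≃ₗ[ZMod 2] W := LinearEquiv.ofFinrankEq _ _ (by simp [hW])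
    refine ⟨W.subtype ∘ₗ e.toLinearMap, W.injective_subtype.comp e.injective, ?_⟩
    rintro _ ⟨x, hx, rfl⟩
    exact hM ⟨(e x).2, by simpa using hx⟩

section

open scoped Pointwise

variable {K V : Type*} [Field K] [AddCommGroup V] [Module K V]

theorem exists_submodule_finrank_eq {d : ℕ} (hd : d ≤ Module.finrank K V) :
    ∃ F : Submodule K V, Module.finrank K F = d := by
  obtain ⟨b, hb⟩ := exists_linearIndependent_of_le_finrank hd
  exact ⟨Submodule.span K (Set.range b), by simp [finrank_span_eq_card hb]⟩

theorem containsPG_zero (M : Set V) : ContainsPG K 0 M :=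
  ⟨⊥, finrank_bot K V, by simp⟩

theorem not_containsPG_compl [FiniteDimensional K V] {d : ℕ} {F : Submodule K V}
    (h : Module.finrank K V < d + Module.finrank K F) : ¬ ContainsPG K d (F : Set V)ᶜ := by
  rintro ⟨W, rfl, hW⟩
  refine h.not_ge (Submodule.finrank_add_finrank_le_of_disjoint (Submodule.disjoint_def.2 ?_))
  exact fun x hxW hxF => by_contra fun hx => hW ⟨hxW, hx⟩ hxF

theorem sup_span_singleton_diff_zero_subset {M : Set V} {W : Submodule K V} {v : V}
    (hM : ∀ a : Kˣ, ∀ x ∈ M, a • x ∈ M) (hW : (W : Set V) \ {0} ⊆ M)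
    (hv : v ∉ Mᶜ + (W : Set V)) :
    ((W ⊔ Submodule.span K {v} : Submodule K V) : Set V) \ {0} ⊆ M := by
  rintro x ⟨hx, hx0⟩
  obtain ⟨w, hw, _, hav, rfl⟩ := Submodule.mem_sup.1 hx
  obtain ⟨a, rfl⟩ := Submodule.mem_span_singleton.1 hav
  obtain rfl | ha := eq_or_ne a 0
  · simp only [zero_smul, add_zero] at hx0 ⊢
    exact hW ⟨hw, hx0⟩
  · suffices h : a⁻¹ • w + v ∈ M by
      simpa [Units.smul_def, smul_smul, ha] using hM (Units.mk0 a ha) _ h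
    by_contra hwv
    exact hv ⟨_, hwv, -(a⁻¹ • w), W.neg_mem (W.smul_mem _ hw), by simp⟩

theorem ContainsPG.succ [FiniteDimensional K V] {M : Set V} {d : ℕ} (hd : ContainsPG K d M)
    (h0 : 0 ∉ M) (hM : ∀ a : Kˣ, ∀ x ∈ M, a • x ∈ M)
    (hcard : Mᶜ.ncard * Nat.card K ^ d < Nat.card V) :
    ContainsPG K (d + 1) M := by
  obtain ⟨W, rfl, hW⟩ := hd
  obtain ⟨v, hv⟩ : ∃ v, v ∉ Mᶜ + (W : Set V) := by
    refine (Set.ne_univ_iff_exists_notMem _).1 fun h => hcard.not_ge ?_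
    calc
      Nat.card V = Nat.card ↥(Mᶜ + (W : Set V)) := by rw [h, Nat.card_univ]
      _ ≤ Nat.card ↥Mᶜ * Nat.card W := Set.natCard_add_le
      _ = Mᶜ.ncard * Nat.card K ^ Module.finrank K W := by
          rw [Nat.card_coe_set_eq, Module.natCard_eq_pow_finrank (K := K) (V := W)]
  have hvW : v ∉ W := fun hvW => hv ⟨0, h0, v, hvW, zero_add v⟩
  exact ⟨W ⊔ Submodule.span K {v}, Submodule.finrank_sup_span_singleton hvW,
    sup_span_singleton_diff_zero_subset hM hW hv⟩

variable [Finite K] [FiniteDimensional K V] {M : Set V}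

theorem containsPG_succ_of_ncard_compl_mul_lt {t : ℕ} (h0 : 0 ∉ M)
    (hM : ∀ a : Kˣ, ∀ x ∈ M, a • x ∈ M)
    (hcard : Mᶜ.ncard * Nat.card K ^ t < Nat.card V) :
    ContainsPG K (t + 1) M := by
  induction t with
  | zero => exact (containsPG_zero M).succ h0 hM hcard
  | succ t ih =>
    refine (ih (lt_of_le_of_lt ?_ hcard)).succ h0 hM hcard
    gcongr
    · exact Nat.card_pos
    · exact t.le_succ

theorem ncard_le_of_not_containsPG {t : ℕ} (ht : t ≤ Module.finrank K V) (h0 : 0 ∉ M)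
    (hM : ∀ a : Kˣ, ∀ x ∈ M, a • x ∈ M) (hfree : ¬ ContainsPG K (t + 1) M) :
    M.ncard ≤ Nat.card K ^ Module.finrank K V - Nat.card K ^ (Module.finrank K V - t) := by
  have : Finite V := Module.finite_of_finite K
  have hcompl : Nat.card K ^ (Module.finrank K V - t) ≤ Mᶜ.ncard := by
    by_contra! hlt
    refine hfree (containsPG_succ_of_ncard_compl_mul_lt h0 hM ?_)
    calc
      Mᶜ.ncard * Nat.card K ^ t
          < Nat.card K ^ (Module.finrank K V - t) * Nat.card K ^ t :=
        Nat.mul_lt_mul_of_pos_right hlt (pow_pos Nat.card_pos t)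
      _ = Nat.card V := by
        rw [← pow_add, Nat.sub_add_cancel ht, Module.natCard_eq_pow_finrank (K := K) (V := V)]
  have hsum := Set.ncard_add_ncard_compl M
  rw [Module.natCard_eq_pow_finrank (K := K)] at hsum
  omega

theorem ncard_compl_submodule (F : Submodule K V) :
    ((F : Set V)ᶜ).ncard = Nat.card K ^ Module.finrank K V - Nat.card K ^ Module.finrank K F := by
  have : Finite V := Module.finite_of_finite K
  rw [Set.ncard_compl, Module.natCard_eq_pow_finrank (K := K),
    ← Module.natCard_eq_pow_finrank (K := K) (V := F)]
  rfl

/-- A set of points of `PG(n - 1, q)` is encoded as the set of all nonzero vectors spanning one of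
them, whence the invariance under `Kˣ`; each point is counted `q - 1` times. -/
theorem bose_burton_general {t : ℕ} (ht : t ≤ Module.finrank K V) :
    IsGreatest {m | ∃ M : Set V, 0 ∉ M ∧ (∀ a : Kˣ, ∀ x ∈ M, a • x ∈ M) ∧
        ¬ ContainsPG K (t + 1) M ∧ M.ncard = m}
      (Nat.card K ^ Module.finrank K V - Nat.card K ^ (Module.finrank K V - t)) := by
  constructor
  · obtain ⟨F, hF⟩ := exists_submodule_finrank_eq (K := K) (V := V) (Nat.sub_le _ t)
    refine ⟨(F : Set V)ᶜ, by simp, ?_, not_containsPG_compl (by omega), ?_⟩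
    · exact fun a x hx hax => hx ((F.smul_mem_iff' a).1 hax)
    · rw [ncard_compl_submodule (K := K), hF]
  · rintro _ ⟨M, h0, hM, hfree, rfl⟩
    exact ncard_le_of_not_containsPG ht h0 hM hfree

end

/-- Bose–Burton: `ex({PG(t,2)}, n) = 2ⁿ(1 − 2^{−t})` for `1 ≤ t < n`. -/
theorem bose_burton (t n : ℕ) (ht : 1 ≤ t) (htn : t < n) :
    exNum {x : Fin (t + 1) → ZMod 2 | x ≠ 0} n = 2 ^ n - 2 ^ (n - t) := by
  have hmax := bose_burton_general (K := ZMod 2) (V := Fin n → ZMod 2) (t := t)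
    (by simpa using htn.le)
  simpa [exNum, hasRestriction_setOf_ne_zero_iff, Subsingleton.elim _ (1 : (ZMod 2)ˣ)]
    using hmax.csSup_eq
end

section
/- (Matroidal Erdős–Stone theorem.) For every nonempty matroid N, ex({N}, n) = 2ⁿ(1 − 2^{1−χ(N)} + o(1)); that is, for every ε > 0 there exists n₀ such that for all n ≥ n₀, |ex({N}, n) − (1 − 2^{1−χ(N)})·2ⁿ| ≤ ε·2ⁿ. -/
open scoped Classical

/-!
Write `c` for the critical number of `N`. Nonzero-ness under a surjection onto `𝔽₂ᶜ⁻¹` defines an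
`N`-free matroid of density `1 - 2 ^ (1 - c)`. Conversely, a linear map `φ : 𝔽₂ᵏ → 𝔽₂ᶜ` avoiding `0`
on `N` embeds `N` by `x ↦ (φ x, x)` in the Bose–Burton geometry `(𝔽₂ᶜ \ {0}) × 𝔽₂ᵏ`, so it is enough
to find that geometry in every large matroid `M` of density at least `1 - 2 ^ (1 - c) + ε`.

This goes by induction on `c`. Suppose `X ⊕ U` spans such a geometry in `M`, with `dim X = c` and
`dim U` huge. Once the density of `M` exceeds `1 - 2 ^ (-c) + ε`, the union bound over the `2 ^ c`
elements of `X` and an average over translates give some `y` such that `y + u + X ⊆ M` for a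
positive proportion of the `u ∈ U`. A dense subset of `U` contains an affine subspace `w + U'` of
any prescribed dimension, and `y + w` extends `X` by one dimension, with `U'` in place of `U`.

The dense-set statement is an induction on dimension as well: a dense set `Q` has a popular
difference `h ≠ 0`, and `{x ∈ Q | x + h ∈ Q}` is the preimage of a dense subset of the quotient
by `h`.
-/

open Finset Module

section DoubleCounting

theorem exists_card_le_mul_card_fiber {α β : Type*} {s : Finset α} {t : Finset β} {f : α → β}
    (hf : ∀ a ∈ s, f a ∈ t) (ht : t.Nonempty) : ∃ b ∈ t, #s ≤ #t * #{a ∈ s | f a = b} := by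
  refine exists_le_of_sum_le ht ?_
  rw [← mul_sum, ← card_eq_sum_card_fiberwise hf, sum_const, smul_eq_mul]

variable {G : Type*} [AddGroup G] [Fintype G]

theorem exists_card_mul_card_le_mul_card_add_mem {ι : Type*} [Fintype ι] (S : Finset G)
    (f : ι → G) : ∃ y : G, #S * Fintype.card ι ≤ Fintype.card G * #{i | y + f i ∈ S} := by
  obtain ⟨y, -, hy⟩ := exists_card_le_mul_card_fiber (s := S ×ˢ (univ : Finset ι))
    (f := fun p ↦ p.1 - f p.2) (fun p _ ↦ mem_univ _) univ_nonempty
  rw [card_product] at hy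
  refine ⟨y, hy.trans (Nat.mul_le_mul_left _ (card_le_card_of_injOn Prod.snd ?_ ?_))⟩
  · rintro ⟨s, i⟩ hp
    obtain ⟨hs, rfl⟩ : s ∈ S ∧ s - f i = y := by simpa using hp
    simpa using hs
  · rintro ⟨s, i⟩ hp ⟨s', i'⟩ hp' (rfl : i = i')
    obtain ⟨-, rfl⟩ : s ∈ S ∧ s - f i = y := by simpa using hp
    have hs : s' - f i = s - f i := (mem_filter.1 hp').2
    rw [sub_left_injective hs]

theorem exists_ne_zero_card_mul_le_mul_card_add_mem [Nontrivial G] (Q : Finset G) :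
    ∃ h : G, h ≠ 0 ∧ #Q * (#Q - 1) ≤ Fintype.card G * #{x ∈ Q | x + h ∈ Q} := by
  obtain ⟨h, hh, hcard⟩ := exists_card_le_mul_card_fiber (s := Q.offDiag)
    (t := univ.erase (0 : G)) (f := fun p ↦ -p.1 + p.2)
    (fun p hp ↦ by simpa [neg_add_eq_zero] using (mem_offDiag.1 hp).2.2)
    ((univ_nontrivial (α := G)).erase_nonempty)
  refine ⟨h, ne_of_mem_erase hh, ?_⟩
  calc #Q * (#Q - 1) = #Q.offDiag := by rw [offDiag_card, Nat.mul_sub_one]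
    _ ≤ #(univ.erase (0 : G)) * #{p ∈ Q.offDiag | -p.1 + p.2 = h} := hcard
    _ ≤ Fintype.card G * #{x ∈ Q | x + h ∈ Q} := by
      refine Nat.mul_le_mul (card_le_univ _) (card_le_card_of_injOn Prod.fst ?_ ?_)
      · rintro ⟨x, y⟩ hp
        obtain ⟨⟨hx, hy, -⟩, rfl⟩ : (x ∈ Q ∧ y ∈ Q ∧ x ≠ y) ∧ -x + y = h := by simpa using hp
        simpa using And.intro hx hy
      · rintro ⟨x, y⟩ hp ⟨x', y'⟩ hp' (rfl : x = x')
        have hy : -x + y = -x + y' := (mem_filter.1 hp).2.trans (mem_filter.1 hp').2.symm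
        rw [add_left_cancel hy]

theorem card_le_card_forall_add_mem_add {ι : Type*} [Fintype ι] (f : ι → G) (M : Finset G) :
    Fintype.card G ≤ #{v | ∀ i, v + f i ∈ M} + Fintype.card ι * #Mᶜ := by
  have hsub : ({v | ∀ i, v + f i ∈ M} : Finset G)ᶜ ⊆
      image₂ (fun i m ↦ m - f i) univ Mᶜ := by
    intro v hv
    obtain ⟨i, hi⟩ : ∃ i, v + f i ∉ M := by simpa using hv
    exact mem_image₂.2 ⟨i, mem_univ i, v + f i, mem_compl.2 hi, add_sub_cancel_right v (f i)⟩
  calc Fintype.card G = #{v | ∀ i, v + f i ∈ M} + #({v | ∀ i, v + f i ∈ M} : Finset G)ᶜ :=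
        (card_add_card_compl _).symm
    _ ≤ #{v | ∀ i, v + f i ∈ M} + Fintype.card ι * #Mᶜ :=
        Nat.add_le_add_left ((card_le_card hsub).trans (card_image₂_le _ _ _)) _

theorem exists_ne_zero_mul_card_le_card_add_mem {ε : ℝ} (Q : Finset G)
    (hG : 2 ≤ ε * Fintype.card G) (hQ : ε * Fintype.card G ≤ #Q) :
    ∃ h : G, h ≠ 0 ∧ ε ^ 2 / 2 * Fintype.card G ≤ #{x ∈ Q | x + h ∈ Q} := by
  have hQ2 : 2 ≤ #Q := by exact_mod_cast hG.trans hQ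
  have : Nontrivial G := Fintype.one_lt_card_iff_nontrivial.1 (hQ2.trans (card_le_univ Q))
  obtain ⟨h, hh, hcard⟩ := exists_ne_zero_card_mul_le_mul_card_add_mem Q
  refine ⟨h, hh, ?_⟩
  have hcard' : (#Q : ℝ) * (#Q - 1) ≤ Fintype.card G * #{x ∈ Q | x + h ∈ Q} := by
    have := Nat.cast_le (α := ℝ).2 hcard
    push_cast [Nat.cast_sub (one_le_two.trans hQ2)] at this
    exact this
  have hpos : (0 : ℝ) < Fintype.card G := by exact_mod_cast Fintype.card_pos
  refine le_of_mul_le_mul_left ?_ hpos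
  calc Fintype.card G * (ε ^ 2 / 2 * Fintype.card G)
      = (ε * Fintype.card G) * (ε * Fintype.card G / 2) := by ring
    _ ≤ #Q * (#Q - 1) := by gcongr; linarith
    _ ≤ Fintype.card G * #{x ∈ Q | x + h ∈ Q} := hcard'

theorem mul_card_compl_le {α : Type*} [Fintype α] {M : Finset α} {b ε : ℝ} (hb : 1 ≤ b)
    (hε : 0 ≤ ε) (hM : (1 - 1 / b + ε) * Fintype.card α ≤ #M) :
    b * #Mᶜ ≤ (1 - ε) * Fintype.card α := by
  have hMc : (#Mᶜ : ℝ) = Fintype.card α - #M := by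
    rw [card_compl, Nat.cast_sub (card_le_univ M)]
  calc b * #Mᶜ ≤ b * (Fintype.card α - (1 - 1 / b + ε) * Fintype.card α) := by rw [hMc]; gcongr
    _ = (1 - b * ε) * Fintype.card α := by field_simp; ring
    _ ≤ (1 - ε) * Fintype.card α := by gcongr; exact le_mul_of_one_le_left hε hb

theorem exists_mul_card_le_card_forall_add_mem {ι κ : Type*} [Fintype ι] [Fintype κ] {ε : ℝ}
    {M : Finset G} (f : ι → G) (g : κ → G)
    (hM : Fintype.card ι * #Mᶜ ≤ (1 - ε) * Fintype.card G) :
    ∃ y : G, ε * Fintype.card κ ≤ #{k | ∀ i, y + g k + f i ∈ M} := by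
  set S : Finset G := {v | ∀ i, v + f i ∈ M}
  have hS : ε * Fintype.card G ≤ #S := by
    have : (Fintype.card G : ℝ) ≤ #S + Fintype.card ι * #Mᶜ := by
      exact_mod_cast card_le_card_forall_add_mem_add f M
    linarith
  obtain ⟨y, hy⟩ := exists_card_mul_card_le_mul_card_add_mem S g
  have hpos : (0 : ℝ) < Fintype.card G := by exact_mod_cast Fintype.card_pos
  refine ⟨y, le_of_mul_le_mul_left ?_ hpos⟩
  calc Fintype.card G * (ε * Fintype.card κ) = ε * Fintype.card G * Fintype.card κ := by ring
    _ ≤ #S * Fintype.card κ := by gcongr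
    _ ≤ Fintype.card G * #{k | ∀ i, y + g k + f i ∈ M} := by
      simpa [S] using Nat.cast_le (α := ℝ).2 hy

end DoubleCounting

section AffineSubspaces

theorem zmod_two_eq_zero_or_eq_one : ∀ a : ZMod 2, a = 0 ∨ a = 1 := by decide

theorem eq_zero_of_tail_eq_zero {R : Type*} [Zero R] {n : ℕ} {p : Fin (n + 1) → R} (h₀ : p 0 = 0)
    (htail : Fin.tail p = 0) : p = 0 :=
  funext (Fin.cases h₀ (congrFun htail))

theorem card_le_card_submodule_mul_card_image_mkQ {R V : Type*} [Ring R] [AddCommGroup V]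
    [Module R V] (L : Submodule R V) [Finite L] (Q : Finset V) :
    #Q ≤ Nat.card L * #(Q.image L.mkQ) := by
  have := Fintype.ofFinite L
  refine card_le_mul_card_image Q _ fun q _ ↦ ?_
  obtain ⟨v, rfl⟩ := L.mkQ_surjective q
  have hfiber : {x ∈ Q | L.mkQ x = L.mkQ v} ⊆ univ.image fun l : L ↦ v + l := by
    intro x hx
    have hxv : x - v ∈ L := (Submodule.Quotient.eq L).1 (mem_filter.1 hx).2
    exact mem_image.2 ⟨⟨x - v, hxv⟩, mem_univ _, add_sub_cancel v x⟩
  rw [Nat.card_eq_fintype_card]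
  exact (card_le_card hfiber).trans card_image_le

theorem mul_card_quotient_le_card_image_mkQ {R V : Type*} [Ring R] [AddCommGroup V] [Module R V]
    [Fintype V] (L : Submodule R V) [Fintype (V ⧸ L)] {δ : ℝ} {Q : Finset V}
    (hQ : δ * Fintype.card V ≤ #Q) : δ * Fintype.card (V ⧸ L) ≤ #(Q.image L.mkQ) := by
  have hV : Fintype.card V = Nat.card L * Fintype.card (V ⧸ L) := by
    simpa only [Nat.card_eq_fintype_card] using L.card_eq_card_quotient_mul_card
  have hpos : (0 : ℝ) < Nat.card L := Nat.cast_pos.2 Nat.card_pos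
  refine le_of_mul_le_mul_left ?_ hpos
  calc Nat.card L * (δ * Fintype.card (V ⧸ L)) = δ * Fintype.card V := by
        rw [hV, Nat.cast_mul]; ring
    _ ≤ #Q := hQ
    _ ≤ Nat.card L * #(Q.image L.mkQ) := by
        exact_mod_cast card_le_card_submodule_mul_card_image_mkQ L Q

universe u

variable {V : Type u} [AddCommGroup V] [Module (ZMod 2) V]

/-- `Q` contains an affine subspace of dimension `d`, presented by a base point and a linear
parametrization of its direction. -/
def ContainsAffineSubspace (d : ℕ) (Q : Set V) : Prop :=
  ∃ (w : V) (e : (Fin d → ZMod 2) →ₗ[ZMod 2] V), Function.Injective e ∧ ∀ u, w + e u ∈ Q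

theorem eq_zero_or_eq_of_mem_span_singleton {h x : V} (hx : x ∈ Submodule.span (ZMod 2) {h}) :
    x = 0 ∨ x = h := by
  obtain ⟨a, rfl⟩ := Submodule.mem_span_singleton.1 hx
  rcases zmod_two_eq_zero_or_eq_one a with rfl | rfl
  · exact .inl (zero_smul _ _)
  · exact .inr (one_smul _ _)

-- The set `{x | x ∈ Q ∧ x + h ∈ Q}` is `h`-periodic, so a flat in its image lifts to one in `Q`.
theorem ContainsAffineSubspace.succ_of_image_mkQ {d : ℕ} {h : V} (hh : h ≠ 0) {Q : Set V}
    (hQ : ContainsAffineSubspace d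
      ((Submodule.span (ZMod 2) {h}).mkQ '' {x | x ∈ Q ∧ x + h ∈ Q})) :
    ContainsAffineSubspace (d + 1) Q := by
  set L := Submodule.span (ZMod 2) {h}
  obtain ⟨w', e', he', hmem⟩ := hQ
  obtain ⟨w, rfl⟩ := L.mkQ_surjective w'
  obtain ⟨s, hs⟩ := L.mkQ.exists_rightInverse_of_surjective L.range_mkQ
  let e : (Fin (d + 1) → ZMod 2) →ₗ[ZMod 2] V :=
    (LinearMap.proj 0).smulRight h + s ∘ₗ e' ∘ₗ LinearMap.funLeft (ZMod 2) (ZMod 2) Fin.succ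
  have he (p) : e p = p 0 • h + s (e' (Fin.tail p)) := rfl
  have hmk (p) : L.mkQ (e p) = e' (Fin.tail p) := by
    have hh0 : L.mkQ h = 0 :=
      (Submodule.Quotient.mk_eq_zero L).2 (Submodule.mem_span_singleton_self h)
    rw [he, map_add, map_smul, hh0, smul_zero, zero_add]
    exact LinearMap.congr_fun hs _
  refine ⟨w, e, (injective_iff_map_eq_zero e).2 fun p hp ↦ ?_, fun p ↦ ?_⟩
  · have htail : Fin.tail p = 0 := he' (by rw [← hmk, hp, map_zero, map_zero])
    have hhead : p 0 = 0 := by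
      rw [he, htail, map_zero, map_zero, add_zero] at hp
      exact (smul_eq_zero_iff_left hh).1 hp
    exact eq_zero_of_tail_eq_zero hhead htail
  · obtain ⟨x, ⟨hx, hxh⟩, hxp⟩ := hmem (Fin.tail p)
    rw [← hmk, ← map_add] at hxp
    rcases eq_zero_or_eq_of_mem_span_singleton ((Submodule.Quotient.eq L).1 hxp.symm) with h0 | h1
    · rwa [sub_eq_zero.1 h0]
    · rwa [sub_eq_iff_eq_add'.1 h1]

theorem exists_forall_containsAffineSubspace (d : ℕ) : ∀ {ε : ℝ}, 0 < ε → ∃ m : ℕ,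
    ∀ (V : Type u) [AddCommGroup V] [Module (ZMod 2) V] [Fintype V] (Q : Finset V),
      m ≤ Fintype.card V → ε * Fintype.card V ≤ #Q → ContainsAffineSubspace d (Q : Set V) := by
  induction d with
  | zero =>
    refine fun {ε} hε ↦ ⟨0, fun V _ _ _ Q _ hQ ↦ ?_⟩
    have hQpos : (0 : ℝ) < #Q := lt_of_lt_of_le (by positivity) hQ
    obtain ⟨w, hw⟩ := card_pos.1 (Nat.cast_pos.1 hQpos)
    exact ⟨w, 0, Function.injective_of_subsingleton _, by simpa using hw⟩
  | succ d ih =>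
    intro ε hε
    obtain ⟨m, hm⟩ := ih (show 0 < ε ^ 2 / 2 by positivity)
    refine ⟨max (2 * m) ⌈2 / ε⌉₊, fun V _ _ _ Q hV hQ ↦ ?_⟩
    have hV2 : 2 ≤ ε * Fintype.card V := by
      rw [mul_comm, ← div_le_iff₀ hε]
      exact (Nat.le_ceil _).trans (Nat.cast_le.2 ((le_max_right _ _).trans hV))
    obtain ⟨h, hh, hP⟩ := exists_ne_zero_mul_card_le_card_add_mem Q hV2 hQ
    set P : Finset V := {x ∈ Q | x + h ∈ Q}
    set L := Submodule.span (ZMod 2) {h}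
    have := Fintype.ofFinite (V ⧸ L)
    have hL : Nat.card L = 2 := by
      rw [Module.natCard_eq_pow_finrank (K := ZMod 2), finrank_span_singleton hh]
      simp
    have hVL : Fintype.card V = 2 * Fintype.card (V ⧸ L) := by
      simpa only [hL, Nat.card_eq_fintype_card] using L.card_eq_card_quotient_mul_card
    have hmL : m ≤ Fintype.card (V ⧸ L) := by
      have := le_of_max_le_left hV
      omega
    refine .succ_of_image_mkQ hh ?_
    simpa [P] using hm (V ⧸ L) _ hmL (mul_card_quotient_le_card_image_mkQ L hP)

end AffineSubspaces

section BoseBurton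

/-- The Bose–Burton geometry on `X × U`: the complement of the subspace `0 × U`. A matroid has
critical number at most `dim X` exactly when it embeds in such a geometry, for `U` large. -/
def boseBurton (X U : Type*) [Zero X] : Set (X × U) := {p | p.1 ≠ 0}

theorem HasRestriction.trans {α β γ : Type*} [AddCommMonoid α] [AddCommMonoid β] [AddCommMonoid γ]
    [Module (ZMod 2) α] [Module (ZMod 2) β] [Module (ZMod 2) γ] {L : Set α} {M : Set β} {N : Set γ}
    (hLM : HasRestriction L M) (hMN : HasRestriction M N) : HasRestriction L N := by
  obtain ⟨ψ, hψ, hψL⟩ := hLM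
  obtain ⟨θ, hθ, hθM⟩ := hMN
  refine ⟨θ ∘ₗ ψ, hθ.comp hψ, ?_⟩
  rintro _ ⟨x, hx, rfl⟩
  exact hθM ⟨ψ x, hψL ⟨x, hx, rfl⟩, rfl⟩

theorem hasRestriction_boseBurton {α X : Type*} [AddCommMonoid α] [AddCommMonoid X]
    [Module (ZMod 2) α] [Module (ZMod 2) X] {N : Set α} (φ : α →ₗ[ZMod 2] X)
    (hφ : ∀ x ∈ N, φ x ≠ 0) : HasRestriction N (boseBurton X α) :=
  ⟨φ.prod LinearMap.id, fun _ _ h ↦ congrArg Prod.snd h, Set.image_subset_iff.2 hφ⟩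

variable {V : Type*} [AddCommGroup V] [Module (ZMod 2) V]

theorem hasRestriction_boseBurton_succ {c d : ℕ} {U : Type*} [AddCommGroup U] [Module (ZMod 2) U]
    {M : Set V} (hM : 0 ∉ M) {ψ : (Fin c → ZMod 2) × U →ₗ[ZMod 2] V} (hψ : Function.Injective ψ)
    (hψM : ψ '' boseBurton (Fin c → ZMod 2) U ⊆ M) {y : V}
    (hy : ContainsAffineSubspace d {u | ∀ x, y + ψ (x, u) ∈ M}) :
    HasRestriction (boseBurton (Fin (c + 1) → ZMod 2) (Fin d → ZMod 2)) M := by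
  obtain ⟨w, e, he, hmem⟩ := hy
  let θ : (Fin (c + 1) → ZMod 2) × (Fin d → ZMod 2) →ₗ[ZMod 2] V :=
    (LinearMap.proj 0 ∘ₗ LinearMap.fst _ _ _).smulRight (y + ψ (0, w)) +
      ψ ∘ₗ (LinearMap.funLeft (ZMod 2) (ZMod 2) Fin.succ).prodMap e
  have hθ (p) : θ p = p.1 0 • (y + ψ (0, w)) + ψ (Fin.tail p.1, e p.2) := rfl
  have hθM {p} (hp : p.1 ≠ 0) : θ p ∈ M := by
    rcases zmod_two_eq_zero_or_eq_one (p.1 0) with h0 | h1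
    · rw [hθ, h0, zero_smul, zero_add]
      exact hψM ⟨_, fun htail ↦ hp (eq_zero_of_tail_eq_zero h0 htail), rfl⟩
    · rw [hθ, h1, one_smul, add_assoc, ← map_add, Prod.mk_add_mk, zero_add]
      exact hmem p.2 (Fin.tail p.1)
  refine ⟨θ, (injective_iff_map_eq_zero θ).2 ?_, Set.image_subset_iff.2 fun p hp ↦ hθM hp⟩
  rintro ⟨x, u⟩ hxu
  -- Off `0 × U` the map `θ` takes values in `M`, hence nonzero ones.
  obtain rfl : x = 0 := by_contra fun hx ↦ hM (hxu ▸ hθM hx)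
  have htail : Fin.tail (0 : Fin (c + 1) → ZMod 2) = 0 := rfl
  have hψu : ψ (0, e u) = 0 := by simpa [hθ, htail] using hxu
  have hu : e u = 0 := congrArg Prod.snd ((map_eq_zero_iff ψ hψ).1 hψu)
  rw [(map_eq_zero_iff e he).1 hu, Prod.mk_zero_zero]

theorem two_div_two_pow_succ (c : ℕ) : (2 : ℝ) / 2 ^ (c + 1) = 1 / 2 ^ c := by
  rw [pow_succ']
  field_simp

universe u

theorem exists_forall_hasRestriction_boseBurton (c : ℕ) : ∀ (d : ℕ) {ε : ℝ}, 0 < ε → ∃ m : ℕ,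
    ∀ (V : Type u) [AddCommGroup V] [Module (ZMod 2) V] [Fintype V] (M : Finset V),
      m ≤ finrank (ZMod 2) V → 0 ∉ M → (1 - 2 / 2 ^ c + ε) * Fintype.card V ≤ #M →
        HasRestriction (boseBurton (Fin c → ZMod 2) (Fin d → ZMod 2)) (M : Set V) := by
  induction c with
  | zero =>
    refine fun d {ε} _ ↦ ⟨d, fun V _ _ _ M hV _ _ ↦ ?_⟩
    obtain ⟨ψ, hψ⟩ := (finrank_le_iff_exists_linearMap (R := ZMod 2)
      (M := (Fin 0 → ZMod 2) × (Fin d → ZMod 2)) (M' := V)).1 (by simpa using hV)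
    exact ⟨ψ, hψ, by rintro _ ⟨p, hp, rfl⟩; exact absurd (Subsingleton.elim _ _) hp⟩
  | succ c ih =>
    intro d ε hε
    obtain ⟨D, hD⟩ := exists_forall_containsAffineSubspace d hε
    obtain ⟨m, hm⟩ := ih D hε
    refine ⟨m, fun V _ _ _ M hV hM0 hM ↦ ?_⟩
    rw [two_div_two_pow_succ] at hM
    obtain ⟨ψ, hψ, hψM⟩ := hm V M hV hM0 (by
      refine le_trans ?_ hM
      gcongr
      norm_num)
    have hcompl : (Fintype.card (Fin c → ZMod 2) * #Mᶜ : ℝ) ≤ (1 - ε) * Fintype.card V := by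
      simpa using mul_card_compl_le (one_le_pow₀ one_le_two) hε.le hM
    obtain ⟨y, hy⟩ := exists_mul_card_le_card_forall_add_mem
      (fun x : Fin c → ZMod 2 ↦ ψ (x, 0)) (fun u : Fin D → ZMod 2 ↦ ψ (0, u)) hcompl
    refine hasRestriction_boseBurton_succ hM0 hψ hψM (y := y) ?_
    have := hD _ _ (by simpa using Nat.lt_two_pow_self.le) hy
    simpa [add_assoc, ← map_add] using this

end BoseBurton

section TuranNumber

theorem ncard_setOf_ne_zero_of_surjective {R V W : Type*} [Ring R] [AddCommGroup V]
    [AddCommGroup W] [Module R V] [Module R W] [Finite V] {φ : V →ₗ[R] W}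
    (hφ : Function.Surjective φ) :
    ({x | φ x ≠ 0}.ncard : ℝ) = (1 - 1 / Nat.card W) * Nat.card V := by
  have := Finite.of_surjective φ hφ
  have hker : Nat.card V = Nat.card (LinearMap.ker φ) * Nat.card W := by
    rw [(LinearMap.ker φ).card_eq_card_quotient_mul_card,
      Nat.card_congr (φ.quotKerEquivOfSurjective hφ).toEquiv]
  have hsum : {x | φ x ≠ 0}.ncard + Nat.card (LinearMap.ker φ) = Nat.card V := by
    have hcompl : {x | φ x ≠ 0}ᶜ = (LinearMap.ker φ : Set V) := by ext; simp
    rw [← Set.ncard_add_ncard_compl {x | φ x ≠ 0}, hcompl]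
    rfl
  have hW : (Nat.card W : ℝ) ≠ 0 := Nat.cast_ne_zero.2 Nat.card_pos.ne'
  have hsum' := congrArg (Nat.cast (R := ℝ)) hsum
  have hker' := congrArg (Nat.cast (R := ℝ)) hker
  push_cast at hsum' hker'
  rw [eq_sub_of_add_eq hsum', hker']
  field_simp

theorem bddAbove_ncard_free {α : Type*} [AddCommMonoid α] [Module (ZMod 2) α] (N : Set α) (n : ℕ) :
    BddAbove {m | ∃ M : Set (Fin n → ZMod 2), 0 ∉ M ∧ ¬ HasRestriction N M ∧ M.ncard = m} := by
  refine ⟨Nat.card (Fin n → ZMod 2), ?_⟩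
  rintro _ ⟨M, -, -, rfl⟩
  exact Set.ncard_le_card M

theorem ncard_le_exNum {α : Type*} [AddCommMonoid α] [Module (ZMod 2) α] {N : Set α} {n : ℕ}
    {M : Set (Fin n → ZMod 2)} (hM0 : 0 ∉ M) (hM : ¬ HasRestriction N M) : M.ncard ≤ exNum N n :=
  le_csSup (bddAbove_ncard_free N n) ⟨M, hM0, hM, rfl⟩

theorem exists_ncard_eq_exNum {α : Type*} [AddCommMonoid α] [Module (ZMod 2) α] {N : Set α}
    (hN : N.Nonempty) (n : ℕ) :
    ∃ M : Set (Fin n → ZMod 2), 0 ∉ M ∧ ¬ HasRestriction N M ∧ M.ncard = exNum N n := by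
  refine Nat.sSup_mem (s := {m | ∃ M : Set (Fin n → ZMod 2), 0 ∉ M ∧ ¬ HasRestriction N M ∧
    M.ncard = m}) ⟨0, ∅, Set.notMem_empty 0, ?_, Set.ncard_empty _⟩ (bddAbove_ncard_free N n)
  rintro ⟨ψ, -, hψ⟩
  exact (hN.image ψ).not_subset_empty hψ

variable {k : ℕ} {N : Set (Fin k → ZMod 2)}

theorem exists_linearMap_critNum (hN : 0 ∉ N) :
    ∃ φ : (Fin k → ZMod 2) →ₗ[ZMod 2] (Fin (critNum N) → ZMod 2), ∀ x ∈ N, φ x ≠ 0 :=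
  Nat.sInf_mem (s := {c | ∃ φ : (Fin k → ZMod 2) →ₗ[ZMod 2] (Fin c → ZMod 2), ∀ x ∈ N, φ x ≠ 0})
    ⟨k, LinearMap.id, fun _ hx ↦ ne_of_mem_of_not_mem hx hN⟩

theorem critNum_pos (hN0 : 0 ∉ N) (hNne : N.Nonempty) : 0 < critNum N := by
  obtain ⟨φ, hφ⟩ := exists_linearMap_critNum hN0
  obtain ⟨x, hx⟩ := hNne
  by_contra! hc
  have : IsEmpty (Fin (critNum N)) := by
    rw [Nat.le_zero.1 hc]; infer_instance
  exact hφ x hx (Subsingleton.elim _ _)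

theorem critNum_le_of_hasRestriction {c n : ℕ} {φ : (Fin n → ZMod 2) →ₗ[ZMod 2] (Fin c → ZMod 2)}
    (hN : HasRestriction N {x | φ x ≠ 0}) : critNum N ≤ c := by
  obtain ⟨ψ, -, hψ⟩ := hN
  exact Nat.sInf_le ⟨φ ∘ₗ ψ, fun x hx ↦ hψ ⟨x, hx, rfl⟩⟩

theorem one_sub_mul_two_pow_le_exNum {c n : ℕ} (hc : c < critNum N) (hcn : c ≤ n) :
    (1 - 1 / 2 ^ c) * 2 ^ n ≤ (exNum N n : ℝ) := by
  let φ : (Fin n → ZMod 2) →ₗ[ZMod 2] (Fin c → ZMod 2) :=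
    LinearMap.funLeft (ZMod 2) (ZMod 2) (Fin.castLE hcn)
  have hφ : Function.Surjective φ :=
    LinearMap.funLeft_surjective_of_injective _ _ _ (Fin.castLE_injective hcn)
  calc ((1 - 1 / 2 ^ c) * 2 ^ n : ℝ) = {x | φ x ≠ 0}.ncard := by
        simp [ncard_setOf_ne_zero_of_surjective hφ]
    _ ≤ exNum N n := by
        refine Nat.cast_le.2 (ncard_le_exNum (by simp) fun hN ↦ ?_)
        exact hc.not_ge (critNum_le_of_hasRestriction hN)

theorem exists_exNum_le_mul_two_pow (hN0 : 0 ∉ N) (hNne : N.Nonempty) {ε : ℝ} (hε : 0 < ε) :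
    ∃ n₀ : ℕ, ∀ n ≥ n₀, (exNum N n : ℝ) ≤ (1 - 2 / 2 ^ critNum N + ε) * 2 ^ n := by
  obtain ⟨φ, hφ⟩ := exists_linearMap_critNum hN0
  obtain ⟨n₀, hn₀⟩ := exists_forall_hasRestriction_boseBurton (critNum N) k hε
  refine ⟨n₀, fun n hn ↦ ?_⟩
  obtain ⟨M, hM0, hM, hcard⟩ := exists_ncard_eq_exNum hNne n
  by_contra! hlt
  refine hM ((hasRestriction_boseBurton φ hφ).trans ?_)
  have hdense : (1 - 2 / 2 ^ critNum N + ε) * Fintype.card (Fin n → ZMod 2) ≤ #M.toFinset := by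
    rw [← Set.ncard_eq_toFinset_card', hcard]
    simpa using hlt.le
  simpa using hn₀ _ M.toFinset (by simpa using hn) (by simpa using hM0) hdense

end TuranNumber

/-- Matroidal Erdős–Stone theorem: `ex({N}, n) = 2ⁿ(1 − 2^{1−χ(N)} + o(1))`. -/
theorem matroidal_erdos_stone {k : ℕ} (N : Set (Fin k → ZMod 2))
    (hN0 : 0 ∉ N) (hNne : N.Nonempty) {ε : ℝ} (hε : 0 < ε) :
    ∃ n₀ : ℕ, ∀ n ≥ n₀,
      |(exNum N n : ℝ) - (1 - 2 ^ (1 - (critNum N : ℤ))) * 2 ^ n| ≤ ε * 2 ^ n := by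
  obtain ⟨c, hc⟩ := Nat.exists_eq_add_one_of_ne_zero (critNum_pos hN0 hNne).ne'
  have hcrit : (2 : ℝ) ^ (1 - (critNum N : ℤ)) = 2 / 2 ^ critNum N := by
    rw [zpow_sub₀ two_ne_zero, zpow_one, zpow_natCast]
  obtain ⟨n₀, hupper⟩ := exists_exNum_le_mul_two_pow hN0 hNne hε
  refine ⟨max n₀ c, fun n hn ↦ ?_⟩
  have hup := hupper n (le_of_max_le_left hn)
  have hlow := one_sub_mul_two_pow_le_exNum (hc.symm ▸ Nat.lt_succ_self c : c < critNum N)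
    (le_of_max_le_right hn)
  rw [← two_div_two_pow_succ, ← hc] at hlow
  have hpos : 0 ≤ ε * 2 ^ n := by positivity
  rw [hcrit, abs_le]
  constructor <;> linarith only [hlow, hup, hpos]
end

section
/- (Stability for the matroidal Erdős–Stone theorem.) Let N be a nonempty matroid with χ(N) ≥ 2. For all δ > 0 there exist ε > 0 and n₀ such that for every n ≥ n₀, if M is an n-dimensional N-free matroid with | |M| − (1 − 2^{1−χ(N)})·2ⁿ | ≤ ε·2ⁿ, then there is a matroid B isomorphic to BB(n−1, 2, χ(N)−1), i.e. B = (𝔽₂ⁿ \ {0}) \ W for some subspace W of 𝔽₂ⁿ of dimension n − χ(N) + 1, such that |M Δ B| < δ·2ⁿ. -/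
open scoped Classical

/-!
Call `w₁, …, w_c` a frame in `M` if every nonzero combination of the `wᵢ` lies in `M`. A positive
density of `c`-frames forces, in large dimension, a Bose–Burton geometry of critical number `c` over
a core of any prescribed dimension (supersaturation), and this contains every matroid of critical
number `c` of that dimension. Hence an `N`-free `M` has few frames of length `χ(N)`, and it remains
to prove stability for matroids with few frames, by induction on their length.

A frame `(x, w)` in `M` is an element `x ∈ M` with a frame `w` in the link
`{y ∈ M | x + y ∈ M}`, so for all `x` in a set `G` covering most of `M` the link has few shorter
frames, while its density is at least `2 dens M - 1`.

* If `dens M ≈ 1 / 2` and links of elements of `G` are almost empty, then `x, y, x + y ∈ G` is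
  impossible by inclusion–exclusion, so `G` is sum-free of density near `1 / 2`. Thus `G + G` has
  small doubling ratio, and by Freiman's `3 / 2` theorem it is a hyperplane disjoint from `G`.
* In the inductive step the link of each `x ∈ G` is almost disjoint from a subspace `W` of
  codimension `t`, while the complement of `M` has density about half that of `W`. As `W` is nearly
  covered by the complement of `M` and its translate by `x`, these almost lie in `W` and `x ∈ W`.
  No such `W` contains `G`, so two of them differ; their intersection has codimension `t + 1` and
  almost contains the complement of `M`.
-/

section Density

open Finset Module

section

variable {α : Type*} [Fintype α] [DecidableEq α]

theorem dens_add_dens_sub_one_le_dens_inter (A B : Finset α) :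
    (A.dens : ℝ) + B.dens - 1 ≤ (A ∩ B).dens := by
  have h : ((A ∪ B).dens + (A ∩ B).dens : ℝ) = A.dens + B.dens :=
    mod_cast dens_union_add_dens_inter A B
  have h_le : ((A ∪ B).dens : ℝ) ≤ 1 := mod_cast dens_le_one
  linarith

theorem dens_add_dens_add_dens_le (A B C : Finset α) :
    (A.dens : ℝ) + B.dens + C.dens ≤
      1 + (A ∩ B).dens + (A ∩ C).dens + (B ∩ C).dens := by
  have hBC : ((B ∪ C).dens + (B ∩ C).dens : ℝ) = B.dens + C.dens :=
    mod_cast dens_union_add_dens_inter B C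
  have hA : ((A ∩ (B ∪ C)).dens : ℝ) ≤ (A ∩ B).dens + (A ∩ C).dens := by
    rw [inter_union_distrib_left]
    exact mod_cast dens_union_le _ _
  linarith [dens_add_dens_sub_one_le_dens_inter A (B ∪ C)]

theorem dens_add_dens_compl [Nonempty α] (A : Finset α) : (A.dens : ℝ) + Aᶜ.dens = 1 := by
  rw [← NNRat.cast_add, ← dens_union_of_disjoint disjoint_compl_right, union_compl, dens_univ,
    NNRat.cast_one]

theorem dens_inter_add_dens_compl (A B : Finset α) :
    ((A ∩ B).dens : ℝ) + Aᶜ.dens = B.dens + (Aᶜ \ B).dens := by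
  have hA : ((Aᶜ ∩ B).dens + (Aᶜ \ B).dens : ℝ) = Aᶜ.dens := mod_cast dens_inter_add_dens_sdiff _ _
  have hB : ((B ∩ A).dens + (B \ A).dens : ℝ) = B.dens := mod_cast dens_inter_add_dens_sdiff _ _
  rw [sdiff_eq_inter_compl, inter_comm B Aᶜ, inter_comm B A] at hB
  linarith

theorem dens_symmDiff_compl [Nonempty α] (A B : Finset α) :
    ((symmDiff A Bᶜ).dens : ℝ) = 1 - A.dens - B.dens + 2 * (A ∩ B).dens := by
  have h_eq : symmDiff A Bᶜ = (A ∩ B) ∪ (A ∪ B)ᶜ := by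
    ext x
    simp only [mem_symmDiff, mem_compl, mem_union, mem_inter]
    tauto
  have h_disj : Disjoint (A ∩ B) (A ∪ B)ᶜ :=
    disjoint_compl_right.mono_left (inter_subset_left.trans subset_union_left)
  have h_union : ((A ∪ B).dens + (A ∩ B).dens : ℝ) = A.dens + B.dens :=
    mod_cast dens_union_add_dens_inter A B
  rw [h_eq, dens_union_of_disjoint h_disj, NNRat.cast_add]
  linarith [dens_add_dens_compl (A ∪ B)]

end

theorem dens_submodule {K V : Type*} [Field K] [Finite K] [AddCommGroup V] [Module K V]
    [Fintype V] (W : Submodule K V) :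
    ((W : Set V).toFinset.dens : ℝ) = (1 / Nat.card K) ^ finrank K (V ⧸ W) := by
  have h_pos : (0 : ℝ) < Nat.card W := mod_cast Nat.card_pos
  rw [nnratCast_dens, Set.toFinset_card, ← Nat.card_eq_fintype_card, ← Nat.card_eq_fintype_card,
    Submodule.card_eq_card_quotient_mul_card W, one_div_pow,
    Module.natCard_eq_pow_finrank (K := K) (V := V ⧸ W)]
  push_cast
  field_simp

theorem dens_submodule_zmod_two {V : Type*} [AddCommGroup V] [Module (ZMod 2) V] [Fintype V]
    (W : Submodule (ZMod 2) V) :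
    ((W : Set V).toFinset.dens : ℝ) = (1 / 2) ^ finrank (ZMod 2) (V ⧸ W) := by
  rw [dens_submodule, Nat.card_zmod, Nat.cast_ofNat]

end Density

section Link

open Finset
open scoped Pointwise BigOperators

variable {V : Type*} [AddCommGroup V] [DecidableEq V]

/-- The link of `x` in `M`: the elements of `M` whose translate by `x` also lies in `M`. Passing to
a link lowers the critical threshold by one, which drives all the inductions below. -/
def link (M : Finset V) (x : V) : Finset V := M ∩ (-x +ᵥ M)

@[simp]
theorem mem_link {M : Finset V} {x y : V} : y ∈ link M x ↔ y ∈ M ∧ x + y ∈ M := by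
  rw [link, mem_inter, mem_neg_vadd_finset_iff, vadd_eq_add]

theorem neg_vadd_inter_neg_vadd (M : Finset V) (x y : V) :
    (-x +ᵥ M) ∩ (-y +ᵥ M) = -x +ᵥ link M (y - x) := by
  rw [link, vadd_finset_inter, vadd_vadd]
  congr 3
  abel

variable [Fintype V]

theorem two_mul_dens_sub_one_le_dens_link (M : Finset V) (x : V) :
    2 * (M.dens : ℝ) - 1 ≤ (link M x).dens := by
  have h := dens_add_dens_sub_one_le_dens_inter M (-x +ᵥ M)
  rw [dens_vadd_finset] at h
  rw [link]
  linarith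

theorem three_mul_dens_le_one_add_dens_link (M : Finset V) (x y : V) :
    3 * (M.dens : ℝ) ≤ 1 + (link M x).dens + (link M y).dens + (link M (y - x)).dens := by
  have h := dens_add_dens_add_dens_le M (-x +ᵥ M) (-y +ᵥ M)
  rw [neg_vadd_inter_neg_vadd, dens_vadd_finset, dens_vadd_finset, dens_vadd_finset] at h
  simp only [link] at h ⊢
  linarith

theorem expect_indicator_add_mul_indicator_add (M : Finset V) (u v : V) :
    𝔼 x : V, (M : Set V).indicator (1 : V → ℝ) (u + x) * (M : Set V).indicator 1 (v + x) =
      (link M (v - u)).dens := by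
  rw [← expect_indicator_one]
  refine Fintype.expect_equiv (Equiv.addLeft u) _ _ fun x ↦ ?_
  have h : v - u + (u + x) = v + x := by abel
  rw [mul_comm]
  simp [Set.indicator_apply, h, ite_and]

theorem sq_dens_le_expect_dens_link (M : Finset V) (U : AddSubgroup V) :
    (M.dens : ℝ) ^ 2 ≤ 𝔼 u : U, ((link M (u : V)).dens : ℝ) := by
  let f : V → ℝ := (M : Set V).indicator 1
  have h_mean : 𝔼 x : V, 𝔼 u : U, f (u + x) = M.dens := by
    rw [expect_comm]
    simp_rw [← expect_indicator_one M]
    rw [← Fintype.expect_const (𝔼 x : V, f x) (ι := U)]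
    exact expect_congr rfl fun u _ ↦ Fintype.expect_equiv (Equiv.addLeft (u : V)) _ _ fun x ↦ rfl
  have h_sq : 𝔼 x : V, (𝔼 u : U, f (u + x)) ^ 2 = 𝔼 u : U, ((link M (u : V)).dens : ℝ) := by
    calc 𝔼 x : V, (𝔼 u : U, f (u + x)) ^ 2
        = 𝔼 u : U, 𝔼 v : U, 𝔼 x : V, f (u + x) * f (v + x) := by
          simp_rw [sq, expect_mul_expect]
          rw [expect_comm]
          exact expect_congr rfl fun u _ ↦ expect_comm ..
      _ = 𝔼 u : U, 𝔼 v : U, ((link M ((v - u : U) : V)).dens : ℝ) := by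
          simp_rw [f, expect_indicator_add_mul_indicator_add, AddSubgroup.coe_sub]
      _ = 𝔼 _u : U, 𝔼 v : U, ((link M (v : V)).dens : ℝ) :=
          expect_congr rfl fun u _ ↦
            Fintype.expect_equiv (Equiv.subRight u) _ _ fun v ↦ rfl
      _ = 𝔼 u : U, ((link M (u : V)).dens : ℝ) := Fintype.expect_const _
  calc (M.dens : ℝ) ^ 2 = (𝔼 x : V, 𝔼 u : U, f (u + x) * 1) ^ 2 := by simp_rw [mul_one, h_mean]
    _ ≤ (𝔼 x : V, (𝔼 u : U, f (u + x)) ^ 2) * 𝔼 _x : V, (1 : ℝ) ^ 2 := by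
        simpa using expect_mul_sq_le_sq_mul_sq univ (fun x ↦ 𝔼 u : U, f (u + x)) fun _ ↦ 1
    _ = 𝔼 u : U, ((link M (u : V)).dens : ℝ) := by simp [h_sq]

theorem exists_ne_zero_le_dens_link {M : Finset V} {U : AddSubgroup V} {η : ℝ} (hη : 0 < η)
    (hM : η ≤ M.dens) (hU : 2 / η ^ 2 ≤ Nat.card U) :
    ∃ u ∈ U, u ≠ 0 ∧ η ^ 2 / 2 ≤ (link M u).dens := by
  by_contra! h
  have h_card : (Fintype.card U : ℝ)⁻¹ ≤ η ^ 2 / 2 := by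
    rw [← Nat.card_eq_fintype_card, ← inv_div]
    exact inv_anti₀ (by positivity) hU
  have h_le (u : U) : ((link M (u : V)).dens : ℝ) < (if u = 0 then 1 else 0) + η ^ 2 / 2 := by
    split_ifs with hu
    · have : ((link M (u : V)).dens : ℝ) ≤ 1 := mod_cast dens_le_one
      linarith [sq_pos_of_pos hη]
    · simpa using h u u.2 (by simpa using hu)
  have h_lt := calc η ^ 2 ≤ (M.dens : ℝ) ^ 2 := by gcongr
    _ ≤ 𝔼 u : U, ((link M (u : V)).dens : ℝ) := sq_dens_le_expect_dens_link M U
    _ < 𝔼 u : U, ((if u = 0 then 1 else 0) + η ^ 2 / 2) :=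
        expect_lt_expect (fun u _ ↦ (h_le u).le) ⟨0, mem_univ 0, h_le 0⟩
    _ = (Fintype.card U : ℝ)⁻¹ + η ^ 2 / 2 := by
        rw [expect_add_distrib, Fintype.expect_const]
        simp
  linarith

end Link

section BoseBurtonFrame

open Finset Module

universe u

theorem forall_zmod_two {p : ZMod 2 → Prop} : (∀ r, p r) ↔ p 0 ∧ p 1 :=
  Fin.forall_fin_two

theorem exists_finrank_eq_forall_add_mem (m : ℕ) {η : ℝ} (hη : 0 < η) :
    ∃ d : ℕ, ∀ (V : Type u) [AddCommGroup V] [Module (ZMod 2) V] [Fintype V]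
      (D : Finset V) (U : Submodule (ZMod 2) V), d ≤ finrank (ZMod 2) U → η ≤ D.dens →
      ∃ x : V, ∃ W ≤ U, finrank (ZMod 2) W = m ∧ ∀ w ∈ W, x + w ∈ D := by
  induction m generalizing η with
  | zero =>
    refine ⟨0, fun V _ _ _ D U _ hD ↦ ?_⟩
    obtain ⟨x, hx⟩ : D.Nonempty := dens_pos.1 (mod_cast hη.trans_le hD)
    exact ⟨x, ⊥, bot_le, finrank_bot _ _, by simpa using hx⟩
  | succ m ih =>
    obtain ⟨d, hd⟩ := ih (η := η ^ 2 / 2) (by positivity)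
    obtain ⟨e, he⟩ := pow_unbounded_of_one_lt (2 / η ^ 2) (one_lt_two (α := ℝ))
    refine ⟨max (d + 1) e, fun V _ _ _ D U hU hD ↦ ?_⟩
    obtain ⟨hdU, heU⟩ := max_le_iff.1 hU
    have h_card : 2 / η ^ 2 ≤ Nat.card U := by
      rw [Module.natCard_eq_pow_finrank (K := ZMod 2), Nat.card_zmod]
      push_cast
      exact he.le.trans (pow_le_pow_right₀ one_le_two heU)
    obtain ⟨u, huU, hu, h_link⟩ :=
      exists_ne_zero_le_dens_link (U := U.toAddSubgroup) hη hD h_card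
    obtain ⟨T, hT_disj, hT_sup⟩ := IsModularLattice.exists_disjoint_and_sup_eq
      ((Submodule.span_singleton_le_iff_mem u U).2 huU)
    have hTU : T ≤ U := hT_sup ▸ le_sup_right
    have h_sup {S : Submodule (ZMod 2) V} (hS : S ≤ T) :
        finrank (ZMod 2) ↥(S ⊔ Submodule.span (ZMod 2) {u}) = finrank (ZMod 2) S + 1 :=
      Submodule.finrank_sup_span_singleton fun huS ↦
        hu (Submodule.disjoint_def.1 hT_disj u (Submodule.mem_span_singleton_self u) (hS huS))
    obtain ⟨x, S, hST, hS, hxS⟩ := hd V (link D u) T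
      (by have := h_sup le_rfl; rw [sup_comm, hT_sup] at this; lia) h_link
    refine ⟨x, S ⊔ Submodule.span (ZMod 2) {u}, sup_le (hST.trans hTU)
      ((Submodule.span_singleton_le_iff_mem u U).2 huU), by rw [h_sup hST, hS], ?_⟩
    intro w hw
    obtain ⟨s, hs, v, hv, rfl⟩ := Submodule.mem_sup.1 hw
    obtain ⟨r, rfl⟩ := Submodule.mem_span_singleton.1 hv
    obtain ⟨hs₀, hs₁⟩ := mem_link.1 (hxS s hs)
    have h_smul : ∀ r : ZMod 2, x + (s + r • u) ∈ D :=
      forall_zmod_two.2 ⟨by simpa using hs₀, by rwa [one_smul, ← add_assoc, add_comm]⟩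
    exact h_smul r

section Frames

variable {V : Type*} [AddCommGroup V] [Module (ZMod 2) V]

/-- `IsBoseBurtonFrame W w M` says that `w` spans, on top of the core `W`, a Bose–Burton geometry
inside `M`: every element of `span w + W` with a nonzero coefficient on `w` lies in `M`. -/
def IsBoseBurtonFrame {c : ℕ} (W : Submodule (ZMod 2) V) (w : Fin c → V) (M : Finset V) : Prop :=
  ∀ a : Fin c → ZMod 2, a ≠ 0 → ∀ z ∈ W, ∑ i, a i • w i + z ∈ M

theorem isBoseBurtonFrame_of_isEmpty (W : Submodule (ZMod 2) V) (w : Fin 0 → V) (M : Finset V) :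
    IsBoseBurtonFrame W w M :=
  fun a ha ↦ absurd (Subsingleton.elim a 0) ha

theorem hasRestriction_of_isBoseBurtonFrame {E : Type*} [AddCommGroup E] [Module (ZMod 2) E]
    [Module.Finite (ZMod 2) E] [Module.Finite (ZMod 2) V] {N : Set E} {c : ℕ}
    {φ : E →ₗ[ZMod 2] Fin c → ZMod 2} (hφ : ∀ x ∈ N, φ x ≠ 0) {M : Finset V} (hM : 0 ∉ M)
    {W : Submodule (ZMod 2) V} (hW : finrank (ZMod 2) W = finrank (ZMod 2) E) {w : Fin c → V}
    (hw : IsBoseBurtonFrame W w M) : HasRestriction N (M : Set V) := by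
  let e : E ≃ₗ[ZMod 2] W := LinearEquiv.ofFinrankEq E W hW.symm
  let ψ : E →ₗ[ZMod 2] V :=
    (Fintype.linearCombination (ZMod 2) w).comp φ + W.subtype.comp e.toLinearMap
  have hψ (v : E) : ψ v = ∑ i, φ v i • w i + e v := by
    simp [ψ, Fintype.linearCombination_apply]
  have hψM {v : E} (hv : φ v ≠ 0) : ψ v ∈ M := hψ v ▸ hw (φ v) hv (e v) (e v).2
  refine ⟨ψ, (injective_iff_map_eq_zero ψ).2 fun v hv ↦ ?_,
    Set.image_subset_iff.2 fun v hv ↦ hψM (hφ v hv)⟩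
  have hφv : φ v = 0 := by
    by_contra h
    exact hM (hv ▸ hψM h)
  simpa [hψ, hφv] using hv

theorem isBoseBurtonFrame_cons {c : ℕ} {W : Submodule (ZMod 2) V} {x : V} {w : Fin c → V}
    {M : Finset V} :
    IsBoseBurtonFrame W (Fin.cons x w : Fin (c + 1) → V) M ↔
      (∀ z ∈ W, x + z ∈ M) ∧ IsBoseBurtonFrame W w (link M x) := by
  have h_cons (r : ZMod 2) (a : Fin c → ZMod 2) :
      (Fin.cons r a : Fin (c + 1) → ZMod 2) ≠ 0 ↔ r ≠ 0 ∨ a ≠ 0 :=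
    Matrix.cons_nonzero_iff
  simp only [IsBoseBurtonFrame, Fin.forall_fin_succ_pi, Fin.sum_univ_succ, Fin.cons_zero,
    Fin.cons_succ, h_cons, mem_link, forall_zmod_two]
  constructor
  · intro h
    refine ⟨fun z hz ↦ by simpa using h.2 0 (by simp) z hz, fun a ha z hz ↦ ⟨?_, ?_⟩⟩
    · simpa using h.1 a (by simpa using ha) z hz
    · simpa [add_assoc] using h.2 a (by simp) z hz
  · rintro ⟨hx, hw⟩
    refine ⟨fun a ha z hz ↦ ?_, fun a _ z hz ↦ ?_⟩
    · simpa using (hw a (by simpa using ha) z hz).1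
    · obtain rfl | ha := eq_or_ne a 0
      · simpa using hx z hz
      · simpa [add_assoc] using (hw a ha z hz).2

variable [Fintype V]

/-- The finset of `c`-tuples in `V` which are frames of Bose–Burton geometries (with trivial core)
inside `M`; its density is the analogue of a subgraph density. -/
noncomputable def frames (c : ℕ) (M : Finset V) : Finset (Fin c → V) :=
  {w | IsBoseBurtonFrame ⊥ w M}

@[simp]
theorem mem_frames {c : ℕ} {M : Finset V} {w : Fin c → V} :
    w ∈ frames c M ↔ IsBoseBurtonFrame ⊥ w M := by
  simp [frames]

theorem frames_zero (M : Finset V) : frames 0 M = univ :=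
  eq_univ_of_forall fun w ↦ mem_frames.2 (isBoseBurtonFrame_of_isEmpty ⊥ w M)

theorem dens_frames_succ (c : ℕ) (M : Finset V) :
    ((frames (c + 1) M).dens : ℝ) =
      (∑ x ∈ M, ((frames c (link M x)).dens : ℝ)) / Fintype.card V := by
  have h_cons (x : V) (w : Fin c → V) :
      (Fin.cons x w : Fin (c + 1) → V) ∈ frames (c + 1) M ↔ x ∈ M ∧ w ∈ frames c (link M x) := by
    simp [isBoseBurtonFrame_cons]
  have h_card : #(frames (c + 1) M) = ∑ x ∈ M, #(frames c (link M x)) := by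
    rw [← card_sigma]
    refine card_equiv ((Fin.consEquiv fun _ ↦ V).symm.trans (Equiv.sigmaEquivProd V _).symm) ?_
    refine (Fin.consEquiv fun _ ↦ V).forall_congr_right.1 ?_
    exact fun p ↦ (h_cons p.1 p.2).trans (by simp)
  simp_rw [nnratCast_dens, h_card, ← sum_div, div_div]
  simp [pow_succ]

theorem dens_frames_one (M : Finset V) : ((frames 1 M).dens : ℝ) = M.dens := by
  rw [dens_frames_succ]
  simp [frames_zero, nnratCast_dens]

theorem dens_sdiff_filter_dens_frames_link_le {c : ℕ} {M : Finset V} {κ η : ℝ} (hη : 0 < η)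
    (h : (frames (c + 1) M).dens ≤ κ * η) :
    ((M \ {x ∈ M | (frames c (link M x)).dens ≤ η}).dens : ℝ) ≤ κ := by
  simp only [← filter_not, not_le]
  refine le_of_mul_le_mul_right (le_trans ?_ h) hη
  rw [dens_frames_succ, nnratCast_dens, div_mul_eq_mul_div]
  gcongr
  calc (#{x ∈ M | η < (frames c (link M x)).dens} : ℝ) * η
      = ∑ x ∈ M with η < (frames c (link M x)).dens, η := by rw [sum_const, nsmul_eq_mul]
    _ ≤ ∑ x ∈ M with η < (frames c (link M x)).dens, ((frames c (link M x)).dens : ℝ) :=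
        sum_le_sum fun x hx ↦ (mem_filter.1 hx).2.le
    _ ≤ ∑ x ∈ M, ((frames c (link M x)).dens : ℝ) :=
        sum_le_sum_of_subset_of_nonneg (filter_subset _ M) fun _ _ _ ↦ NNRat.cast_nonneg _

theorem dens_frames_succ_le (c : ℕ) (M : Finset V) {η : ℝ} (hη : 0 ≤ η) :
    ((frames (c + 1) M).dens : ℝ) ≤
      ({x ∈ M | η ≤ (frames c (link M x)).dens} : Finset V).dens + η := by
  have h_card : (0 : ℝ) < Fintype.card V := mod_cast Fintype.card_pos
  rw [dens_frames_succ, nnratCast_dens, div_le_iff₀ h_card, add_mul, div_mul_cancel₀ _ h_card.ne']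
  have h_le (x : V) : ((frames c (link M x)).dens : ℝ) ≤
      (if η ≤ (frames c (link M x)).dens then 1 else 0) + η := by
    have : ((frames c (link M x)).dens : ℝ) ≤ 1 := mod_cast dens_le_one
    split_ifs <;> linarith
  calc ∑ x ∈ M, ((frames c (link M x)).dens : ℝ)
      ≤ ∑ x ∈ M, ((if η ≤ (frames c (link M x)).dens then 1 else 0) + η) :=
        sum_le_sum fun x _ ↦ h_le x
    _ = #{x ∈ M | η ≤ (frames c (link M x)).dens} + #M * η := by
        rw [sum_add_distrib, sum_boole, sum_const, nsmul_eq_mul]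
    _ ≤ #{x ∈ M | η ≤ (frames c (link M x)).dens} + η * Fintype.card V := by
        rw [mul_comm η]
        gcongr
        exact card_le_univ M

end Frames

theorem exists_isBoseBurtonFrame (m c : ℕ) {η : ℝ} (hη : 0 < η) :
    ∃ d : ℕ, ∀ (V : Type u) [AddCommGroup V] [Module (ZMod 2) V] [Fintype V]
      (M : Finset V) (U : Submodule (ZMod 2) V), d ≤ finrank (ZMod 2) U →
      η ≤ (frames c M).dens →
      ∃ W ≤ U, finrank (ZMod 2) W = m ∧ ∃ w : Fin c → V, IsBoseBurtonFrame W w M := by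
  induction c generalizing η with
  | zero =>
    obtain ⟨d, hd⟩ := exists_finrank_eq_forall_add_mem m one_pos
    refine ⟨d, fun V _ _ _ M U hU _ ↦ ?_⟩
    obtain ⟨-, W, hWU, hW, -⟩ := hd V univ U hU (by simp)
    exact ⟨W, hWU, hW, Fin.elim0, isBoseBurtonFrame_of_isEmpty _ _ _⟩
  | succ c ih =>
    obtain ⟨d, hd⟩ := ih (half_pos hη)
    obtain ⟨e, he⟩ := exists_finrank_eq_forall_add_mem d (half_pos hη)
    refine ⟨e, fun V _ _ _ M U hU hM ↦ ?_⟩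
    obtain ⟨x, S, hSU, hS, hxS⟩ := he V {x ∈ M | η / 2 ≤ (frames c (link M x)).dens} U hU
      (by linarith [dens_frames_succ_le c M (half_pos hη).le])
    have hx : η / 2 ≤ (frames c (link M x)).dens := by
      simpa using (mem_filter.1 (hxS 0 S.zero_mem)).2
    obtain ⟨W, hWS, hW, w, hw⟩ := hd V (link M x) S hS.ge hx
    exact ⟨W, hWS.trans hSU, hW, Fin.cons x w, isBoseBurtonFrame_cons.2
      ⟨fun z hz ↦ (mem_filter.1 (hxS z (hWS hz))).1, hw⟩⟩

end BoseBurtonFrame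

section SumFree

open Finset Module
open scoped Pointwise

theorem exists_addSubgroup_coe_eq_neg_add {G : Type*} [AddGroup G] [DecidableEq G] {A : Finset G}
    (hA : (#(A + A) : ℚ) < 3 / 2 * #A) : ∃ H : AddSubgroup G, (H : Set G) = -A + A := by
  let B : Finset (Multiplicative G) := A.map Multiplicative.ofAdd.toEmbedding
  have hB : (#(B * B) : ℚ) < 3 / 2 * #B := by
    have h_mul : B * B = (A + A).map Multiplicative.ofAdd.toEmbedding := by
      ext x
      simp only [B, mem_mul, mem_add, mem_map_equiv]
      rfl
    rwa [h_mul, card_map, card_map]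
  refine ⟨(invMulSubgroup B hB).toAddSubgroup', Set.ext fun x ↦ ?_⟩
  have h_mem := Set.ext_iff.1 (invMulSubgroup_eq_inv_mul B hB) (Multiplicative.ofAdd x)
  refine Iff.trans h_mem ?_
  simp [B, Set.mem_mul, Set.mem_add, ← ofAdd_add]

variable {V : Type*} [AddCommGroup V] [Module (ZMod 2) V] [Fintype V]

theorem exists_submodule_toFinset_eq_add {A : Finset V}
    (hA : (2 * (A + A).dens : ℝ) < 3 * A.dens) :
    ∃ W : Submodule (ZMod 2) V, (W : Set V).toFinset = A + A := by
  have h_card : (#(A + A) : ℚ) < 3 / 2 * #A := by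
    have h_pos : (0 : ℝ) < Fintype.card V := mod_cast Fintype.card_pos
    rw [nnratCast_dens, nnratCast_dens, ← mul_div_assoc, ← mul_div_assoc,
      div_lt_div_iff_of_pos_right h_pos] at hA
    have : 2 * (#(A + A) : ℚ) < 3 * #A := mod_cast hA
    linarith
  obtain ⟨H, hH⟩ := exists_addSubgroup_coe_eq_neg_add h_card
  refine ⟨AddSubgroup.toZModSubmodule 2 H, coe_injective ?_⟩
  have h_neg : -(A : Set V) = A := by
    ext x
    rw [Set.mem_neg, ZModModule.neg_eq_self]
  rw [Set.coe_toFinset, AddSubgroup.coe_toZModSubmodule, hH, h_neg, coe_add]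

theorem exists_codim_one_disjoint_of_sumFree {A : Finset V} (hA : 2 / 5 < (A.dens : ℝ))
    (h_free : Disjoint (A + A) A) :
    ∃ W : Submodule (ZMod 2) V, finrank (ZMod 2) (V ⧸ W) = 1 ∧
      Disjoint (W : Set V).toFinset A := by
  have h_le : ((A + A).dens + A.dens : ℝ) ≤ 1 := by
    rw [← NNRat.cast_add, ← dens_union_of_disjoint h_free]
    exact mod_cast dens_le_one
  obtain ⟨W, hW⟩ := exists_submodule_toFinset_eq_add (A := A) (by linarith)
  have h_ge : (A.dens : ℝ) ≤ (A + A).dens := by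
    obtain ⟨a, ha⟩ : A.Nonempty := dens_pos.1 (mod_cast (by norm_num : (0 : ℝ) < 2 / 5).trans hA)
    rw [← dens_vadd_finset a A]
    exact mod_cast dens_le_dens (vadd_finset_subset_add ha)
  have h_dens := dens_submodule_zmod_two W
  rw [hW] at h_dens
  refine ⟨W, ?_, hW ▸ h_free⟩
  have h_pos : finrank (ZMod 2) (V ⧸ W) ≠ 0 := by
    intro h
    rw [h, pow_zero] at h_dens
    linarith
  have h_lt : finrank (ZMod 2) (V ⧸ W) < 2 := by
    rw [← pow_lt_pow_iff_right_of_lt_one₀ (a := (1 / 2 : ℝ)) (by norm_num) (by norm_num), ← h_dens]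
    linarith
  lia

theorem exists_codim_one_dens_inter_le {M G : Finset V} {κ : ℝ} (hκ : κ < 1 / 20)
    (hM : 1 / 2 - κ ≤ M.dens) (hMG : (M \ G).dens ≤ κ)
    (hG : ∀ x ∈ G, (link M x).dens ≤ κ) :
    ∃ W : Submodule (ZMod 2) V, finrank (ZMod 2) (V ⧸ W) = 1 ∧
      (M ∩ (W : Set V).toFinset).dens ≤ κ := by
  have h_dens : (M.dens : ℝ) ≤ (M \ G).dens + G.dens := mod_cast dens_le_dens_sdiff_add_dens
  have h_free : Disjoint (G + G) G := by
    rw [disjoint_left]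
    intro z hz hzG
    obtain ⟨x, hx, y, hy, rfl⟩ := mem_add.1 hz
    have h_three := three_mul_dens_le_one_add_dens_link M y x
    rw [ZModModule.sub_eq_add] at h_three
    linarith [hG x hx, hG y hy, hG _ hzG]
  obtain ⟨W, hW, hWG⟩ := exists_codim_one_disjoint_of_sumFree (by linarith) h_free
  refine ⟨W, hW, le_trans (mod_cast dens_le_dens fun x hx ↦ ?_) hMG⟩
  obtain ⟨hxM, hxW⟩ := mem_inter.1 hx
  exact mem_sdiff.2 ⟨hxM, disjoint_left.1 hWG hxW⟩

end SumFree

section Step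

open Finset Module
open scoped Pointwise

theorem finrank_quotient_lt_finrank_quotient {K V : Type*} [DivisionRing K] [AddCommGroup V]
    [Module K V] [Module.Finite K V] {W W' : Submodule K V} (h : W < W') :
    finrank K (V ⧸ W') < finrank K (V ⧸ W) := by
  have := Submodule.finrank_lt_finrank_of_lt h
  have := W.finrank_quotient_add_finrank
  have := W'.finrank_quotient_add_finrank
  lia

section

variable {V : Type*} [AddCommGroup V] [Fintype V] [DecidableEq V]

theorem dens_add_dens_compl_link_sdiff_le (M F : Finset V) (x : V) :
    (F.dens : ℝ) + ((link M x)ᶜ \ F).dens ≤ 2 * Mᶜ.dens + (link M x ∩ F).dens := by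
  linarith [dens_add_dens_compl M, dens_add_dens_compl (link M x),
    dens_inter_add_dens_compl (link M x) F, two_mul_dens_sub_one_le_dens_link M x]

theorem dens_compl_sdiff_le_dens_compl_link_sdiff (M F : Finset V) (x : V) :
    ((Mᶜ \ F).dens : ℝ) ≤ ((link M x)ᶜ \ F).dens :=
  mod_cast dens_le_dens (sdiff_subset_sdiff (compl_subset_compl.2 inter_subset_left) le_rfl)

end

section

variable {R V : Type*} [Ring R] [AddCommGroup V] [Module R V] [Fintype V]

theorem dens_compl_le_two_mul_dens_compl_link_sdiff {x : V} {W : Submodule R V}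
    (hx : x ∉ W) (M : Finset V) :
    (Mᶜ.dens : ℝ) ≤ 2 * ((link M x)ᶜ \ (W : Set V).toFinset).dens := by
  have h_add : ((Mᶜ ∩ (W : Set V).toFinset).dens + (Mᶜ \ (W : Set V).toFinset).dens : ℝ) =
    Mᶜ.dens := mod_cast dens_inter_add_dens_sdiff _ _
  have h_inter : ((Mᶜ ∩ (W : Set V).toFinset).dens : ℝ) ≤
      ((link M x)ᶜ \ (W : Set V).toFinset).dens := by
    rw [← dens_vadd_finset (-x) (Mᶜ ∩ _)]
    refine mod_cast dens_le_dens fun y hy ↦ ?_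
    rw [mem_neg_vadd_finset_iff, vadd_eq_add, mem_inter, mem_compl, Set.mem_toFinset] at hy
    rw [mem_sdiff, mem_compl, mem_link, Set.mem_toFinset]
    exact ⟨fun h ↦ hy.1 h.2, fun hyW ↦ hx ((W.add_mem_iff_left hyW).1 hy.2)⟩
  linarith [dens_compl_sdiff_le_dens_compl_link_sdiff M (W : Set V).toFinset x]

theorem mem_and_dens_compl_sdiff_le {M : Finset V} {x : V} {W : Submodule R V} {τ : ℝ}
    (hW : 10 * τ < (W : Set V).toFinset.dens)
    (hM : 2 * (Mᶜ.dens : ℝ) ≤ (W : Set V).toFinset.dens + 2 * τ)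
    (h_link : (link M x ∩ (W : Set V).toFinset).dens ≤ τ) :
    x ∈ W ∧ (Mᶜ \ (W : Set V).toFinset).dens ≤ 3 * τ := by
  have h_add := dens_add_dens_compl_link_sdiff_le M (W : Set V).toFinset x
  have h_sdiff := dens_compl_sdiff_le_dens_compl_link_sdiff M (W : Set V).toFinset x
  refine ⟨by_contra fun hx ↦ ?_, by linarith⟩
  linarith [dens_compl_le_two_mul_dens_compl_link_sdiff hx M]

theorem dens_sdiff_inf_le (A : Finset V) (W W' : Submodule R V) :
    ((A \ (↑(W ⊓ W') : Set V).toFinset).dens : ℝ) ≤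
      (A \ (W : Set V).toFinset).dens + (A \ (W' : Set V).toFinset).dens := by
  have h_inf : (↑(W ⊓ W') : Set V).toFinset = (W : Set V).toFinset ∩ (W' : Set V).toFinset := by
    ext
    simp
  rw [h_inf, sdiff_inter_distrib_right]
  exact mod_cast dens_union_le _ _

end

variable {V : Type*} [AddCommGroup V] [Module (ZMod 2) V] [Fintype V]

theorem finrank_quotient_eq_succ_and_dens_inter_le {t : ℕ} {M : Finset V}
    {W : Submodule (ZMod 2) V} {τ : ℝ}
    (hτ : 16 * τ ≤ (1 / 2) ^ (t + 1)) (hM : (1 / 2) ^ (t + 1) - τ / 2 ≤ Mᶜ.dens)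
    (hW : t < finrank (ZMod 2) (V ⧸ W)) (hMW : (Mᶜ \ (W : Set V).toFinset).dens ≤ 6 * τ) :
    finrank (ZMod 2) (V ⧸ W) = t + 1 ∧ (M ∩ (W : Set V).toFinset).dens ≤ 7 * τ := by
  have h_add := dens_inter_add_dens_compl M (W : Set V).toFinset
  have h_nonneg : 0 ≤ ((M ∩ (W : Set V).toFinset).dens : ℝ) := NNRat.cast_nonneg _
  have h_sdiff : 0 ≤ ((Mᶜ \ (W : Set V).toFinset).dens : ℝ) := NNRat.cast_nonneg _
  have h_dens := dens_submodule_zmod_two W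
  have h_pos : (0 : ℝ) < (1 / 2) ^ (t + 1) := by positivity
  have h_codim : finrank (ZMod 2) (V ⧸ W) = t + 1 := by
    refine le_antisymm (Nat.lt_succ_iff.1 ?_) hW
    rw [← pow_lt_pow_iff_right_of_lt_one₀ (a := (1 / 2 : ℝ)) (by norm_num) (by norm_num), ← h_dens,
      pow_succ]
    linarith
  rw [h_codim] at h_dens
  exact ⟨h_codim, by linarith⟩

theorem exists_codim_succ_dens_inter_le {t : ℕ} (ht : 1 ≤ t) {M G : Finset V} {τ : ℝ}
    (hτ : 16 * τ ≤ (1 / 2) ^ (t + 1)) (hM : 1 - (1 / 2) ^ (t + 1) - τ ≤ M.dens)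
    (hMG : (M \ G).dens ≤ τ)
    (hG : ∀ x ∈ G, ∃ W : Submodule (ZMod 2) V, finrank (ZMod 2) (V ⧸ W) = t ∧
      (link M x ∩ (W : Set V).toFinset).dens ≤ τ) :
    ∃ W : Submodule (ZMod 2) V, finrank (ZMod 2) (V ⧸ W) = t + 1 ∧
      (M ∩ (W : Set V).toFinset).dens ≤ 7 * τ := by
  have h_pos : (0 : ℝ) < (1 / 2) ^ (t + 1) := by positivity
  have h_small : (1 / 2 : ℝ) ^ (t + 1) ≤ (1 / 2) ^ 2 :=
    pow_le_pow_of_le_one (by norm_num) (by norm_num) (by lia)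
  have h_compl := dens_add_dens_compl M
  have h_le : (M.dens : ℝ) ≤ (M \ G).dens + G.dens := mod_cast dens_le_dens_sdiff_add_dens
  have h_trap {x : V} (hx : x ∈ G) : ∃ W : Submodule (ZMod 2) V,
      finrank (ZMod 2) (V ⧸ W) = t ∧ ((W : Set V).toFinset.dens : ℝ) = 2 * (1 / 2) ^ (t + 1) ∧
      (1 / 2) ^ (t + 1) - τ / 2 ≤ Mᶜ.dens ∧ x ∈ W ∧ (Mᶜ \ (W : Set V).toFinset).dens ≤ 3 * τ := by
    obtain ⟨W, hW, h_link⟩ := hG x hx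
    have h_dens : ((W : Set V).toFinset.dens : ℝ) = 2 * (1 / 2) ^ (t + 1) := by
      rw [dens_submodule_zmod_two, hW]
      ring
    have h_add := dens_add_dens_compl_link_sdiff_le M (W : Set V).toFinset x
    have h_nonneg : 0 ≤ (((link M x)ᶜ \ (W : Set V).toFinset).dens : ℝ) := NNRat.cast_nonneg _
    exact ⟨W, hW, h_dens, by linarith, mem_and_dens_compl_sdiff_le
      (by linarith) (by linarith) h_link⟩
  obtain ⟨x, hx⟩ : G.Nonempty := dens_pos.1 (mod_cast (by linarith : (0 : ℝ) < G.dens))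
  obtain ⟨W, -, h_dens, h_ge, -, hMW⟩ := h_trap hx
  obtain ⟨y, hyG, hyW⟩ : ∃ y ∈ G, y ∉ W := by
    by_contra! h
    have : (G.dens : ℝ) ≤ (W : Set V).toFinset.dens :=
      mod_cast dens_le_dens fun y hy ↦ Set.mem_toFinset.2 (h y hy)
    linarith
  obtain ⟨W', hW', -, -, hyW', hMW'⟩ := h_trap hyG
  have h_lt : W ⊓ W' < W' := inf_lt_right.2 fun h ↦ hyW (h hyW')
  exact ⟨W ⊓ W', finrank_quotient_eq_succ_and_dens_inter_le hτ h_ge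
    (hW' ▸ finrank_quotient_lt_finrank_quotient h_lt)
    (by linarith [dens_sdiff_inf_le Mᶜ W W'])⟩

end Step

section Stability

open Finset Module

universe u

theorem exists_codim_dens_inter_le_of_dens_frames_le {t : ℕ} (ht : 1 ≤ t) {δ : ℝ} (hδ : 0 < δ) :
    ∃ ε > 0, ∃ η > 0, ∀ (V : Type u) [AddCommGroup V] [Module (ZMod 2) V] [Fintype V]
      (M : Finset V), 1 - (1 / 2) ^ t - ε ≤ (M.dens : ℝ) →
      ((frames (t + 1) M).dens : ℝ) ≤ η →
      ∃ W : Submodule (ZMod 2) V, finrank (ZMod 2) (V ⧸ W) = t ∧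
        (M ∩ (W : Set V).toFinset).dens ≤ δ := by
  induction t, ht using Nat.le_induction generalizing δ with
  | base =>
    let κ : ℝ := min δ (1 / 21)
    have hκ : 0 < κ := by positivity
    have hκδ : κ ≤ δ := min_le_left _ _
    have hκ_lt : κ ≤ 1 / 21 := min_le_right _ _
    refine ⟨κ, hκ, κ * κ, mul_pos hκ hκ, fun V _ _ _ M hM h_frames ↦ ?_⟩
    obtain ⟨W, hW, hMW⟩ := exists_codim_one_dens_inter_le (G := {x ∈ M | (link M x).dens ≤ κ})
      (by linarith) (by linarith)
      (by simpa only [dens_frames_one] using dens_sdiff_filter_dens_frames_link_le hκ h_frames)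
      fun x hx ↦ (mem_filter.1 hx).2
    exact ⟨W, hW, hMW.trans hκδ⟩
  | succ t ht ih =>
    let τ : ℝ := min (δ / 7) ((1 / 2) ^ (t + 1) / 16)
    have hτ : 0 < τ := by positivity
    have hτδ : τ ≤ δ / 7 := min_le_left _ _
    have hτt : τ ≤ (1 / 2) ^ (t + 1) / 16 := min_le_right _ _
    obtain ⟨ε, hε, η, hη, h⟩ := ih hτ
    have hετ : min τ (ε / 2) ≤ τ := min_le_left _ _
    have hεε : min τ (ε / 2) ≤ ε / 2 := min_le_right _ _
    refine ⟨min τ (ε / 2), by positivity, τ * η, mul_pos hτ hη, fun V _ _ _ M hM h_frames ↦ ?_⟩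
    obtain ⟨W, hW, hMW⟩ := exists_codim_succ_dens_inter_le ht
      (G := {x ∈ M | (frames (t + 1) (link M x)).dens ≤ η}) (τ := τ)
      (by linarith) (by linarith) (dens_sdiff_filter_dens_frames_link_le hη h_frames)
      fun x hx ↦ h V (link M x) (by
        rw [pow_succ] at hM
        linarith [two_mul_dens_sub_one_le_dens_link M x]) (mem_filter.1 hx).2
    exact ⟨W, hW, by linarith⟩

theorem ncard_coe_eq_dens_mul_card {α : Type*} [Fintype α] (A : Finset α) :
    ((A : Set α).ncard : ℝ) = A.dens * Nat.card α := by
  rw [Set.ncard_coe_finset, Nat.card_eq_fintype_card]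
  exact mod_cast (dens_mul_card A).symm

theorem coe_compl_toFinset_submodule {R V : Type*} [Semiring R] [AddCommMonoid V] [Module R V]
    [Fintype V] (W : Submodule R V) :
    (((W : Set V).toFinsetᶜ : Finset V) : Set V) = {x | x ≠ 0 ∧ x ∉ W} := by
  ext x
  simpa using fun h : x ∉ W ↦ (ne_of_mem_of_not_mem W.zero_mem h).symm

theorem exists_codim_ncard_symmDiff_lt_of_not_hasRestriction {E : Type*} [AddCommGroup E]
    [Module (ZMod 2) E] [Module.Finite (ZMod 2) E] {N : Set E} {t : ℕ} (ht : 1 ≤ t)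
    {φ : E →ₗ[ZMod 2] Fin (t + 1) → ZMod 2} (hφ : ∀ x ∈ N, φ x ≠ 0) {δ : ℝ} (hδ : 0 < δ) :
    ∃ ε > 0, ∃ n₀ : ℕ, ∀ (V : Type u) [AddCommGroup V] [Module (ZMod 2) V] [Finite V] (M : Set V),
      n₀ ≤ finrank (ZMod 2) V → 0 ∉ M → ¬ HasRestriction N M →
      (1 - (1 / 2) ^ t - ε) * Nat.card V ≤ (M.ncard : ℝ) →
      ∃ W : Submodule (ZMod 2) V, finrank (ZMod 2) (V ⧸ W) = t ∧
        ((symmDiff M {x | x ≠ 0 ∧ x ∉ W}).ncard : ℝ) < δ * Nat.card V := by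
  obtain ⟨ε, hε, η, hη, h_stab⟩ :=
    exists_codim_dens_inter_le_of_dens_frames_le ht (by positivity : 0 < δ / 4)
  obtain ⟨n₀, h_super⟩ := exists_isBoseBurtonFrame (finrank (ZMod 2) E) (t + 1) hη
  refine ⟨min ε (δ / 4), by positivity, n₀, fun V _ _ _ M hn h0 h_free hM ↦ ?_⟩
  have := Fintype.ofFinite V
  have h_card : (0 : ℝ) < Nat.card V := mod_cast Nat.card_pos
  lift M to Finset V using M.toFinite
  rw [ncard_coe_eq_dens_mul_card, mul_le_mul_iff_left₀ h_card] at hM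
  have h_frames : ((frames (t + 1) M).dens : ℝ) ≤ η := by
    by_contra! h
    obtain ⟨W, -, hW, w, hw⟩ := h_super V M ⊤ (by rwa [finrank_top]) h.le
    exact h_free (hasRestriction_of_isBoseBurtonFrame hφ h0 hW hw)
  obtain ⟨W, hW, hMW⟩ := h_stab V M (by linarith [min_le_left ε (δ / 4)]) h_frames
  refine ⟨W, hW, ?_⟩
  rw [← coe_compl_toFinset_submodule, ← coe_symmDiff, ncard_coe_eq_dens_mul_card,
    mul_lt_mul_iff_left₀ h_card, dens_symmDiff_compl, dens_submodule_zmod_two, hW]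
  linarith [min_le_right ε (δ / 4)]

theorem exists_linearMap_critNum_forall_ne_zero {n : ℕ} {M : Set (Fin n → ZMod 2)}
    (hM : 0 < critNum M) :
    ∃ φ : (Fin n → ZMod 2) →ₗ[ZMod 2] (Fin (critNum M) → ZMod 2), ∀ x ∈ M, φ x ≠ 0 :=
  Nat.sInf_mem (Nat.nonempty_of_pos_sInf hM)

end Stability

/-- Stability for the matroidal Erdős–Stone theorem. -/
theorem erdos_stone_stability {k : ℕ} (N : Set (Fin k → ZMod 2))
    (hN0 : 0 ∉ N) (hNne : N.Nonempty) (hχ : 2 ≤ critNum N)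
    {δ : ℝ} (hδ : 0 < δ) :
    ∃ ε : ℝ, 0 < ε ∧ ∃ n₀ : ℕ, ∀ n ≥ n₀, ∀ M : Set (Fin n → ZMod 2),
      0 ∉ M → ¬ HasRestriction N M →
      |(M.ncard : ℝ) - (1 - 2 ^ (1 - (critNum N : ℤ))) * 2 ^ n| ≤ ε * 2 ^ n →
      ∃ W : Submodule (ZMod 2) (Fin n → ZMod 2),
        Module.finrank (ZMod 2) W = n - critNum N + 1 ∧
        ((symmDiff M {x : Fin n → ZMod 2 | x ≠ 0 ∧ x ∉ W}).ncard : ℝ) < δ * 2 ^ n := by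
  have h_crit := exists_linearMap_critNum_forall_ne_zero (two_pos.trans_le hχ)
  obtain ⟨t, ht⟩ := Nat.exists_eq_add_of_le' (one_le_two.trans hχ)
  have h_pow : (2 : ℝ) ^ (1 - ((t + 1 : ℕ) : ℤ)) = (1 / 2) ^ t := by simp
  rw [ht] at h_crit hχ ⊢
  obtain ⟨φ, hφ⟩ := h_crit
  obtain ⟨ε, hε, n₀, h⟩ :=
    exists_codim_ncard_symmDiff_lt_of_not_hasRestriction (by lia : 1 ≤ t) hφ hδ
  refine ⟨ε, hε, max n₀ (t + 1), fun n hn M h0 h_free hM ↦ ?_⟩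
  obtain ⟨hn₀, hnt⟩ := max_le_iff.1 hn
  have h_card : (Nat.card (Fin n → ZMod 2) : ℝ) = 2 ^ n := by simp
  rw [h_pow] at hM
  obtain ⟨W, hW, hMW⟩ := h (Fin n → ZMod 2) M (by simpa using hn₀) h0 h_free
    (by rw [h_card]; linarith [(abs_le.1 hM).1])
  have h_finrank := W.finrank_quotient_add_finrank
  rw [hW, Module.finrank_fin_fun] at h_finrank
  exact ⟨W, by lia, h_card ▸ hMW⟩
end

section
/- (Critical element theorem.) Let N be a matroid with χ(N) ≥ 2 such that χ(N \ {e}) < χ(N) for some e ∈ N. Then there exists n₀ such that for all n ≥ n₀, ex({N}, n) = 2ⁿ(1 − 2^{1−χ(N)}), and moreover every n-dimensional N-free matroid M with |M| = 2ⁿ(1 − 2^{1−χ(N)}) is a Bose–Burton geometry, i.e. M = (𝔽₂ⁿ \ {0}) \ W for some subspace W of 𝔽₂ⁿ of dimension n − χ(N) + 1. -/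
open scoped Classical

/-!
Write `χ` for `critNum N` and let `A` be the complement of an `N`-free set `M`, so `0 ∈ A`.

A geometric Erdős–Stone argument shows that, for large `n`, `M ∩ (e + M)` has density at most
`1 - 2 ^ (2 - χ) + o(1)` for every `e ∈ M`. Otherwise this set, which is invariant under
translation by `e`, contains a Bose–Burton geometry `(U ⊔ C) \ U` with `dim C = χ - 1` and `e ∈ U`.
Let `φ` map `𝔽₂ᵐ` to `C` avoiding `0` on `N` minus its critical element, which `φ` must then kill,
and let `α` map `𝔽₂ᵐ` injectively to `U`, sending the critical element to `e`. Then `φ + α` embeds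
`N` in `M`.

If moreover `|A| ≤ q := 2 ^ (n - χ + 1)`, then by inclusion–exclusion `|A|` is at least
`(1 - o(1)) q`, and elements outside `A` have few representations as differences of elements of
`A`. Hence most elements of `A` have at least `3/4 * |A|` representations. The sum of two such
elements has at least `|A| / 2`, so lies in `A`; the set of popular elements therefore has doubling
below `3/2` and generates a subgroup inside `A`, which for reasons of size is all of `A`.
-/

open Finset Module
open scoped Pointwise

section PopularDifferences

variable {G : Type*} [AddCommGroup G]

lemma card_inter_vadd_add_card_inter_vadd_le (A : Finset G) (x y : G) :
    #(A ∩ (x +ᵥ A)) + #(A ∩ (y +ᵥ A)) ≤ #A + #(A ∩ ((x + y) +ᵥ A)) := by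
  have hy : #(A ∩ (y +ᵥ A)) = #((x +ᵥ A) ∩ ((x + y) +ᵥ A)) := by
    rw [← card_vadd_finset x, vadd_finset_inter, vadd_vadd]
  have hunion : #(A ∩ (x +ᵥ A) ∪ (x +ᵥ A) ∩ ((x + y) +ᵥ A)) ≤ #A :=
    card_vadd_finset x A ▸ card_le_card (union_subset inter_subset_right inter_subset_left)
  have hinter : #(A ∩ (x +ᵥ A) ∩ ((x +ᵥ A) ∩ ((x + y) +ᵥ A))) ≤ #(A ∩ ((x + y) +ᵥ A)) :=
    card_le_card (inter_subset_inter inter_subset_left inter_subset_right)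
  have := card_union_add_card_inter (A ∩ (x +ᵥ A)) ((x +ᵥ A) ∩ ((x + y) +ᵥ A))
  lia

lemma card_inter_neg_vadd (A : Finset G) (x : G) : #(A ∩ (-x +ᵥ A)) = #(A ∩ (x +ᵥ A)) := by
  rw [← card_vadd_finset x, vadd_finset_inter, vadd_neg_vadd, inter_comm]

lemma card_compl_inter_vadd_compl [Fintype G] (A : Finset G) (x : G) :
    #(Aᶜ ∩ (x +ᵥ Aᶜ)) + 2 * #A = Fintype.card G + #(A ∩ (x +ᵥ A)) := by
  have hcompl : #(Aᶜ ∩ (x +ᵥ Aᶜ)) + #(A ∪ (x +ᵥ A)) = Fintype.card G := by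
    rw [compl_eq_univ_sdiff, vadd_finset_sdiff, vadd_finset_univ, ← compl_eq_univ_sdiff,
      ← compl_eq_univ_sdiff, ← compl_union, card_compl_add_card]
  have := card_union_add_card_inter A (x +ᵥ A)
  rw [card_vadd_finset] at this
  lia

lemma card_sq_mul_card_le_card_mul_sum_card_inter_vadd [Fintype G] (A : Finset G)
    (H : AddSubgroup G) :
    #A ^ 2 * #{h | h ∈ H} ≤ Fintype.card G * ∑ h with h ∈ H, #(A ∩ (h +ᵥ A)) := by
  set T : Finset G := {h | h ∈ H} with hT
  have henergy : addEnergy A T ≤ #T * ∑ h ∈ T, #(A ∩ (h +ᵥ A)) := by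
    rw [← card_sigma, ← card_product]
    refine card_le_card_of_injOn (fun p ↦ (p.2.2, ⟨p.2.2 - p.2.1, p.1.1⟩)) ?_ ?_
    · simp only [Set.MapsTo, mem_coe, mem_filter, mem_product, mem_sigma, mem_inter, hT,
        mem_univ, true_and]
      rintro ⟨⟨a, b⟩, h, h'⟩ ⟨⟨⟨ha, hb⟩, hh, hh'⟩, heq⟩
      refine ⟨hh', H.sub_mem hh' hh, ha, mem_vadd_finset.2 ⟨b, hb, ?_⟩⟩
      rw [vadd_eq_add, sub_add_eq_add_sub, add_comm h', ← heq, add_sub_cancel_right]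
    · simp only [Set.InjOn, mem_coe, mem_filter, Prod.mk.injEq, Sigma.mk.injEq, heq_eq_eq]
      rintro ⟨⟨a, b⟩, h, h'⟩ ⟨-, heq⟩ ⟨⟨_, b₂⟩, h₂, _⟩ ⟨-, heq₂⟩ ⟨rfl, hsub, rfl⟩
      obtain rfl : h = h₂ := sub_right_injective hsub
      simpa using add_right_cancel (heq.symm.trans heq₂)
  have hle : #A ^ 2 * #T * #T ≤ Fintype.card G * (∑ h ∈ T, #(A ∩ (h +ᵥ A))) * #T := calc
    #A ^ 2 * #T * #T = #A ^ 2 * #T ^ 2 := by ring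
    _ ≤ #(A + T) * addEnergy A T := le_card_add_mul_addEnergy A T
    _ ≤ Fintype.card G * (#T * ∑ h ∈ T, #(A ∩ (h +ᵥ A))) := by gcongr; exact card_le_univ _
    _ = _ := by ring
  exact Nat.le_of_mul_le_mul_right hle (card_pos.2 ⟨0, by simp [hT]⟩)

lemma exists_addSubgroup_of_card_add_lt_three_halves (S : Finset G) (hS : 2 * #(S + S) < 3 * #S) :
    ∃ H : AddSubgroup G, ∀ x, x ∈ H ↔ ∃ a ∈ S, ∃ b ∈ S, -a + b = x := by
  let T : Finset (Multiplicative G) := S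
  have hT : (#(T * T) : ℚ) < 3 / 2 * #T := by
    have : (2 * #(T * T) : ℚ) < 3 * #T := mod_cast hS
    linarith
  refine ⟨(invMulSubgroup T hT).toAddSubgroup', fun x ↦ ?_⟩
  have hmem : Multiplicative.ofAdd x ∈ invMulSubgroup T hT ↔
      ∃ a ∈ T, ∃ b ∈ T, a⁻¹ * b = Multiplicative.ofAdd x := by
    rw [← SetLike.mem_coe, invMulSubgroup_eq_inv_mul, ← coe_mul, mem_coe, mem_mul]
    simp only [mem_inv, exists_exists_and_eq_and]
  exact hmem

lemma three_mul_card_le_four_mul_card_popular [Fintype G] {A : Finset G} (hA : A.Nonempty)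
    (h : ∀ x ∉ A, 16 * (Fintype.card G * #(A ∩ (x +ᵥ A))) ≤ #A ^ 2) :
    3 * #A ≤ 4 * #{x ∈ A | 3 * #A ≤ 4 * #(A ∩ (x +ᵥ A))} := by
  set S : Finset G := {x ∈ A | 3 * #A ≤ 4 * #(A ∩ (x +ᵥ A))} with hS
  have hcard : 0 < Fintype.card G := Fintype.card_pos
  have htotal : #A ^ 2 ≤ ∑ x : G, #(A ∩ (x +ᵥ A)) := by
    have := card_sq_mul_card_le_card_mul_sum_card_inter_vadd A ⊤
    simp only [AddSubgroup.mem_top, filter_true, card_univ] at this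
    exact Nat.le_of_mul_le_mul_left (mul_comm _ (Fintype.card G) ▸ this) hcard
  have houtside : 16 * ∑ x ∈ Aᶜ, #(A ∩ (x +ᵥ A)) ≤ #A ^ 2 := by
    refine Nat.le_of_mul_le_mul_left ?_ hcard
    calc Fintype.card G * (16 * ∑ x ∈ Aᶜ, #(A ∩ (x +ᵥ A)))
        = ∑ x ∈ Aᶜ, 16 * (Fintype.card G * #(A ∩ (x +ᵥ A))) := by
          rw [mul_left_comm, mul_sum, mul_sum]
      _ ≤ #Aᶜ * #A ^ 2 := sum_le_card_nsmul _ _ _ fun x hx ↦ h x (mem_compl.1 hx)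
      _ ≤ Fintype.card G * #A ^ 2 := by gcongr; exact card_le_univ _
  have hpopular : ∑ x ∈ S, #(A ∩ (x +ᵥ A)) ≤ #S * #A :=
    sum_le_card_nsmul _ _ _ fun x _ ↦ card_le_card inter_subset_left
  have hrest : 4 * ∑ x ∈ A \ S, #(A ∩ (x +ᵥ A)) ≤ #(A \ S) * (3 * #A) := by
    rw [mul_sum]
    refine sum_le_card_nsmul _ _ _ fun x hx ↦ ?_
    simp only [hS, mem_sdiff, mem_filter, not_and, not_le] at hx
    exact (hx.2 hx.1).le
  have hSA : S ⊆ A := filter_subset _ _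
  have hsplit := card_sdiff_add_card_eq_card hSA
  rw [← sum_add_sum_compl A, ← sum_sdiff hSA] at htotal
  have : 0 < #A := hA.card_pos
  nlinarith

lemma exists_addSubgroup_subset_of_card_inter_vadd_le [Fintype G] {A : Finset G} (hA : A.Nonempty)
    (h : ∀ x ∉ A, 16 * (Fintype.card G * #(A ∩ (x +ᵥ A))) ≤ #A ^ 2) :
    ∃ H : AddSubgroup G, (H : Set G) ⊆ A ∧ 3 * #A ≤ 4 * #{x | x ∈ H} := by
  have hpos : 0 < #A := hA.card_pos
  have hmem {x : G} (hx : #A ≤ 2 * #(A ∩ (x +ᵥ A))) : x ∈ A := by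
    by_contra hxA
    have := h x hxA
    have hle : #A ≤ Fintype.card G := card_le_univ A
    nlinarith
  set S : Finset G := {x ∈ A | 3 * #A ≤ 4 * #(A ∩ (x +ᵥ A))} with hS
  have hadd {x y : G} (hx : 3 * #A ≤ 4 * #(A ∩ (x +ᵥ A)))
      (hy : 3 * #A ≤ 4 * #(A ∩ (y +ᵥ A))) : x + y ∈ A := by
    have := card_inter_vadd_add_card_inter_vadd_le A x y
    exact hmem (by lia)
  have hcard : 3 * #A ≤ 4 * #S := three_mul_card_le_four_mul_card_popular hA h
  have hSS : #(S + S) ≤ #A := card_le_card <| add_subset_iff.2 fun x hx y hy ↦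
    hadd (mem_filter.1 hx).2 (mem_filter.1 hy).2
  obtain ⟨H, hH⟩ := exists_addSubgroup_of_card_add_lt_three_halves S (by lia)
  have hSH : S ⊆ ({x | x ∈ H} : Finset G) := fun x hx ↦ by
    have hzero : 0 ∈ A := hmem (by rw [zero_vadd, inter_self]; lia)
    have hzeroS : 0 ∈ S := by
      rw [hS, mem_filter, zero_vadd, inter_self]
      exact ⟨hzero, by lia⟩
    exact mem_filter_univ x |>.2 <| (hH x).2 ⟨0, hzeroS, x, hx, by simp⟩
  refine ⟨H, fun x hx ↦ ?_, hcard.trans (by gcongr)⟩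
  obtain ⟨a, ha, b, hb, rfl⟩ := (hH x).1 hx
  exact hadd (card_inter_neg_vadd A a ▸ (mem_filter.1 ha).2) (mem_filter.1 hb).2

lemma exists_mem_notMem_le_card_inter_vadd [Fintype G] {A : Finset G} {D U : AddSubgroup G}
    {δ : ℝ} (hA : δ * Fintype.card G ≤ #A) (hU : 2 * #{x | x ∈ D} < δ * #{x | x ∈ U}) :
    ∃ u ∈ U, u ∉ D ∧ δ ^ 2 / 2 * Fintype.card G ≤ #(A ∩ (u +ᵥ A)) := by
  by_contra! hsmall
  have hG : (0 : ℝ) < Fintype.card G := mod_cast Fintype.card_pos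
  have hδ : 0 < δ := pos_of_mul_pos_left ((by positivity : (0 : ℝ) ≤ _).trans_lt hU)
    (Nat.cast_nonneg _)
  have hApos : (0 : ℝ) < #A := (mul_pos hδ hG).trans_le hA
  have hsecond : (#A : ℝ) ^ 2 * #{x | x ∈ U} ≤
      Fintype.card G * ∑ u : G with u ∈ U, (#(A ∩ (u +ᵥ A)) : ℝ) :=
    mod_cast card_sq_mul_card_le_card_mul_sum_card_inter_vadd A U
  have hterm (u : G) (hu : u ∈ U) : (#(A ∩ (u +ᵥ A)) : ℝ) ≤
      (if u ∈ D then (#A : ℝ) else 0) + δ ^ 2 / 2 * Fintype.card G := by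
    split_ifs with huD
    · have : (#(A ∩ (u +ᵥ A)) : ℝ) ≤ #A := mod_cast card_le_card inter_subset_left
      exact this.trans (le_add_of_nonneg_right (by positivity))
    · simpa using (hsmall u hu huD).le
  have hsum : ∑ u : G with u ∈ U, (#(A ∩ (u +ᵥ A)) : ℝ) ≤
      #{x | x ∈ D} * #A + #{x | x ∈ U} * (δ ^ 2 / 2 * Fintype.card G) := calc
    _ ≤ ∑ u : G with u ∈ U, ((if u ∈ D then (#A : ℝ) else 0) + δ ^ 2 / 2 * Fintype.card G) :=
      sum_le_sum fun u hu ↦ hterm u ((mem_filter_univ u).1 hu)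
    _ ≤ #{x | x ∈ D} * #A + #{x | x ∈ U} * (δ ^ 2 / 2 * Fintype.card G) := by
      rw [sum_add_distrib, ← sum_filter, sum_const, sum_const, nsmul_eq_mul, nsmul_eq_mul]
      gcongr
      exact subset_univ _
  exact lt_irrefl ((#A : ℝ) ^ 2 * #{x | x ∈ U}) <| calc
    _ ≤ Fintype.card G * (#{x | x ∈ D} * #A + #{x | x ∈ U} * (δ ^ 2 / 2 * Fintype.card G)) :=
      hsecond.trans (by gcongr)
    _ = 2 * #{x | x ∈ D} * (Fintype.card G * #A / 2) +
        #{x | x ∈ U} * (δ * Fintype.card G) ^ 2 / 2 := by ring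
    _ < δ * #{x | x ∈ U} * (Fintype.card G * #A / 2) +
        #{x | x ∈ U} * (#A : ℝ) ^ 2 / 2 :=
      add_lt_add_of_lt_of_le (mul_lt_mul_of_pos_right hU (by positivity)) (by gcongr)
    _ = δ * Fintype.card G * (#{x | x ∈ U} * #A / 2) + #{x | x ∈ U} * (#A : ℝ) ^ 2 / 2 := by
      ring
    _ ≤ #A * (#{x | x ∈ U} * #A / 2) + #{x | x ∈ U} * (#A : ℝ) ^ 2 / 2 := by gcongr
    _ = (#A : ℝ) ^ 2 * #{x | x ∈ U} := by ring

lemma card_le_card_filter_forall_add_mem [Fintype G] (C M : Finset G) :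
    Fintype.card G ≤ #{y | ∀ a ∈ C, a + y ∈ M} + #C * #Mᶜ := by
  have hsub : ({y | ∀ a ∈ C, a + y ∈ M} : Finset G)ᶜ ⊆ -C + Mᶜ := fun y hy ↦ by
    simp only [mem_compl, mem_filter_univ, not_forall] at hy
    obtain ⟨a, ha, hay⟩ := hy
    exact mem_add.2 ⟨-a, neg_mem_neg ha, a + y, mem_compl.2 hay, neg_add_cancel_left a y⟩
  rw [← card_add_card_compl {y | ∀ a ∈ C, a + y ∈ M}]
  gcongr
  exact (card_le_card hsub).trans (card_neg (s := C) ▸ card_add_le)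

end PopularDifferences

section BinarySpaces

variable {V : Type*} [AddCommGroup V] [Module (ZMod 2) V]

lemma card_eq_two_pow_finrank [Fintype V] : Fintype.card V = 2 ^ finrank (ZMod 2) V := by
  rw [card_eq_pow_finrank (K := ZMod 2), ZMod.card]

lemma card_filter_mem_submodule [Fintype V] (W : Submodule (ZMod 2) V) :
    #{x | x ∈ W} = 2 ^ finrank (ZMod 2) W := by
  rw [← card_eq_two_pow_finrank, Fintype.card_subtype]

lemma exists_submodule_coe_eq [Fintype V] {A : Finset V} {k : ℕ}
    (hlower : 3 * 2 ^ k ≤ 4 * #A) (hupper : #A ≤ 2 ^ k)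
    (h : ∀ x ∉ A, 16 * (Fintype.card V * #(A ∩ (x +ᵥ A))) ≤ #A ^ 2) :
    ∃ W : Submodule (ZMod 2) V, finrank (ZMod 2) W = k ∧ (W : Set V) = A := by
  have hpos : 0 < 2 ^ k := by positivity
  obtain ⟨H, hHA, hcard⟩ :=
    exists_addSubgroup_subset_of_card_inter_vadd_le (card_pos.1 (by lia)) h
  let W := AddSubgroup.toZModSubmodule 2 H
  have hW : #{x | x ∈ H} = 2 ^ finrank (ZMod 2) W := card_filter_mem_submodule W
  have hsub : ({x | x ∈ H} : Finset V) ⊆ A := fun x hx ↦ hHA ((mem_filter_univ x).1 hx)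
  have hle := card_le_card hsub
  have hk : k < finrank (ZMod 2) W + 1 :=
    (Nat.pow_lt_pow_iff_right one_lt_two).1 (by rw [pow_succ]; lia)
  have hk' : finrank (ZMod 2) W ≤ k := (Nat.pow_le_pow_iff_right one_lt_two).1 (by lia)
  obtain rfl : finrank (ZMod 2) W = k := by lia
  refine ⟨W, rfl, ?_⟩
  rw [← eq_of_subset_of_card_le hsub (by lia)]
  ext x
  simp [W]
lemma exists_submodule_coe_eq_of_card_inter_vadd_lt [Finite V] {A : Finset V} {c k : ℕ}
    (hV : finrank (ZMod 2) V = c + k) (hupper : #A ≤ 2 ^ k)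
    (h : ∀ x ∉ A, (#(A ∩ (x +ᵥ A)) : ℝ) < 2 * #A - (2 - 1 / (32 * 2 ^ c)) * 2 ^ k) :
    ∃ W : Submodule (ZMod 2) V, finrank (ZMod 2) W = k ∧ (W : Set V) = A := by
  have := Fintype.ofFinite V
  have hcard : Fintype.card V = 2 ^ c * 2 ^ k := by rw [card_eq_two_pow_finrank, hV, pow_add]
  have hc : (1 : ℝ) ≤ 2 ^ c := one_le_pow₀ one_le_two
  have hδ : (1 : ℝ) / (32 * 2 ^ c) ≤ 1 / 2 := by
    rw [div_le_div_iff₀ (by positivity) two_pos]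
    linarith
  have hlower : 3 * 2 ^ k ≤ 4 * #A := by
    by_cases! hA : ∀ x, x ∈ A
    · rw [eq_univ_of_forall hA, card_univ, hcard]
      nlinarith [Nat.one_le_two_pow (n := c), Nat.one_le_two_pow (n := k)]
    · obtain ⟨x, hx⟩ := hA
      have hpos : (0 : ℝ) < 2 * #A - (2 - 1 / (32 * 2 ^ c)) * 2 ^ k :=
        (Nat.cast_nonneg _).trans_lt (h x hx)
      have : (3 : ℝ) * 2 ^ k ≤ 4 * #A := by
        nlinarith [mul_le_mul_of_nonneg_right hδ (pow_nonneg zero_le_two k)]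
      exact_mod_cast this
  refine exists_submodule_coe_eq hlower hupper fun x hx ↦ ?_
  have hlower' : (3 : ℝ) * 2 ^ k ≤ 4 * #A := mod_cast hlower
  have hupper' : (#A : ℝ) ≤ 2 ^ k := mod_cast hupper
  have hx' : (#(A ∩ (x +ᵥ A)) : ℝ) ≤ 2 ^ k / (32 * 2 ^ c) := by
    linarith [h x hx, div_eq_mul_one_div ((2 : ℝ) ^ k) (32 * 2 ^ c)]
  suffices (16 * (Fintype.card V * #(A ∩ (x +ᵥ A))) : ℝ) ≤ (#A : ℝ) ^ 2 from mod_cast this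
  calc (16 * (Fintype.card V * #(A ∩ (x +ᵥ A))) : ℝ)
      ≤ 16 * (2 ^ c * 2 ^ k * (2 ^ k / (32 * 2 ^ c))) := by
        rw [hcard]
        push_cast
        gcongr
    _ = (2 ^ k) ^ 2 / 2 := by field_simp; norm_num
    _ ≤ (3 / 4 * 2 ^ k) ^ 2 := by nlinarith [sq_nonneg ((2 : ℝ) ^ k)]
    _ ≤ (#A : ℝ) ^ 2 := by gcongr; linarith

/-- The subspace of all `u` with `u + A = A`: the stabilizer of `A` under translation, which is a
subspace because the scalars are `ZMod 2`. -/
noncomputable def periods (A : Finset V) : Submodule (ZMod 2) V :=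
  AddSubgroup.toZModSubmodule 2 (AddAction.stabilizer V A)

lemma mem_periods {A : Finset V} {u : V} : u ∈ periods A ↔ u +ᵥ A = A := Iff.rfl

lemma mem_periods_iff_forall_add_mem {A : Finset V} {u : V} :
    u ∈ periods A ↔ ∀ x ∈ A, u + x ∈ A :=
  AddAction.mem_stabilizer_finset'

lemma periods_le_periods_inter_vadd (A : Finset V) (u : V) :
    periods A ≤ periods (A ∩ (u +ᵥ A)) := fun v hv ↦ by
  rw [mem_periods] at hv ⊢
  rw [vadd_finset_inter, vadd_comm, hv]

lemma mem_periods_inter_vadd (A : Finset V) (u : V) : u ∈ periods (A ∩ (u +ᵥ A)) := by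
  rw [mem_periods, vadd_finset_inter, vadd_vadd, ZModModule.add_self, zero_vadd, inter_comm]

lemma exists_forall_two_pow_le_mul_two_pow (a : ℕ) {δ : ℝ} (hδ : 0 < δ) :
    ∃ k : ℕ, ∀ n ≥ k, (2 : ℝ) ^ a ≤ δ * 2 ^ n := by
  obtain ⟨k, hk⟩ := pow_unbounded_of_one_lt (2 ^ a / δ) one_lt_two
  exact ⟨k, fun n hn ↦ (div_le_iff₀' hδ).1 (hk.le.trans (pow_le_pow_right₀ one_le_two hn))⟩

lemma exists_finrank_eq_add_mem (d t : ℕ) {δ : ℝ} (hδ : 0 < δ) :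
    ∃ K : ℕ, ∀ (V : Type*) [AddCommGroup V] [Module (ZMod 2) V] [Fintype V]
      (A : Finset V) (D U : Submodule (ZMod 2) V), D ≤ U → D ≤ periods A →
      finrank (ZMod 2) D = d → K ≤ finrank (ZMod 2) U → δ * Fintype.card V ≤ #A →
      ∃ D' : Submodule (ZMod 2) V, D ≤ D' ∧ D' ≤ U ∧ finrank (ZMod 2) D' = d + t ∧
        ∃ w, ∀ u ∈ D', u + w ∈ A := by
  induction t generalizing d δ with
  | zero =>
    refine ⟨0, fun V _ _ _ A D U hDU hDA hD _ hA ↦ ?_⟩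
    have hApos : (0 : ℝ) < #A :=
      (mul_pos hδ (Nat.cast_pos.2 Fintype.card_pos)).trans_le hA
    obtain ⟨w, hw⟩ := card_pos.1 (Nat.cast_pos.1 hApos)
    exact ⟨D, le_rfl, hDU, hD, w, fun u hu ↦ mem_periods_iff_forall_add_mem.1 (hDA hu) w hw⟩
  | succ t ih =>
    obtain ⟨K, hK⟩ := ih (d + 1) (δ := δ ^ 2 / 2) (by positivity)
    obtain ⟨k, hk⟩ := exists_forall_two_pow_le_mul_two_pow (d + 2) hδ
    refine ⟨max K k, fun V _ _ _ A D U hDU hDA hD hU hA ↦ ?_⟩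
    have hlarge : 2 * (#{x | x ∈ D} : ℝ) < δ * #{x | x ∈ U} := by
      rw [card_filter_mem_submodule, card_filter_mem_submodule, hD]
      push_cast
      calc 2 * (2 : ℝ) ^ d < 2 ^ (d + 2) := by rw [pow_add]; linarith [pow_pos two_pos (M₀ := ℝ) d]
        _ ≤ δ * 2 ^ finrank (ZMod 2) U := hk _ (by lia)
    obtain ⟨u, huU, huD, hu⟩ := exists_mem_notMem_le_card_inter_vadd
      (D := D.toAddSubgroup) (U := U.toAddSubgroup) hA hlarge
    have hspan : Submodule.span (ZMod 2) {u} ≤ periods (A ∩ (u +ᵥ A)) :=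
      (Submodule.span_singleton_le_iff_mem _ _).2 (mem_periods_inter_vadd A u)
    obtain ⟨D', hDD', hD'U, hD', w, hw⟩ := hK V (A ∩ (u +ᵥ A)) (D ⊔ Submodule.span (ZMod 2) {u}) U
      (sup_le hDU ((Submodule.span_singleton_le_iff_mem _ _).2 huU))
      (sup_le (hDA.trans (periods_le_periods_inter_vadd A u)) hspan)
      (by rw [Submodule.finrank_sup_span_singleton huD, hD]) (by lia) hu
    exact ⟨D', le_sup_left.trans hDD', hD'U, by lia, w, fun v hv ↦ mem_of_mem_inter_left (hw v hv)⟩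

lemma le_periods_filter {M : Finset V} {D C W : Submodule (ZMod 2) V} [Fintype V]
    (hDM : D ≤ periods M) (hDW : D ≤ W) :
    D ≤ periods {y | (∀ a ∈ C, a + y ∈ M) ∧ y ∉ W} := fun u hu ↦ by
  simp only [mem_periods_iff_forall_add_mem, mem_filter_univ]
  refine fun x hx ↦ ⟨fun a ha ↦ ?_, ?_⟩
  · rw [add_left_comm]
    exact mem_periods_iff_forall_add_mem.1 (hDM hu) _ (hx.1 a ha)
  · rw [W.add_mem_iff_right (hDW hu)]
    exact hx.2

/-- `M` contains the Bose–Burton geometry `(U ⊔ C) \ U` of critical number `finrank C`, recorded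
through a complement `C` of `U` in `U ⊔ C`, so that its elements are the sums `a + u` with
`0 ≠ a ∈ C` and `u ∈ U`. -/
structure IsBoseBurtonPair (M : Finset V) (U C : Submodule (ZMod 2) V) : Prop where
  disjoint : Disjoint U C
  add_mem : ∀ a ∈ C, a ≠ 0 → ∀ u ∈ U, a + u ∈ M

lemma isBoseBurtonPair_bot (M : Finset V) (U : Submodule (ZMod 2) V) : IsBoseBurtonPair M U ⊥ :=
  ⟨disjoint_bot_right, fun _ ha hne ↦ (hne ((Submodule.mem_bot _).1 ha)).elim⟩

lemma IsBoseBurtonPair.mono {M M' : Finset V} {U C : Submodule (ZMod 2) V}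
    (h : IsBoseBurtonPair M U C) (hM : M ⊆ M') : IsBoseBurtonPair M' U C :=
  ⟨h.disjoint, fun a ha hne u hu ↦ hM (h.add_mem a ha hne u hu)⟩

lemma IsBoseBurtonPair.sup_span_singleton {M : Finset V} {U U' C : Submodule (ZMod 2) V} {w : V}
    (h : IsBoseBurtonPair M U C) (hU' : U' ≤ U) (hw : w ∉ U ⊔ C)
    (hmem : ∀ u ∈ U', ∀ a ∈ C, a + (u + w) ∈ M) :
    IsBoseBurtonPair M U' (C ⊔ Submodule.span (ZMod 2) {w}) := by
  refine ⟨?_, fun x hx hne u hu ↦ ?_⟩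
  · have hw0 : w ≠ 0 := fun h0 ↦ hw (h0 ▸ zero_mem _)
    exact (h.disjoint.disjoint_sup_right_of_disjoint_sup_left
      ((Submodule.disjoint_span_singleton' hw0).2 hw)).mono_left hU'
  · obtain ⟨a, ha, b, hb, rfl⟩ := Submodule.mem_sup.1 hx
    obtain ⟨r, rfl⟩ := Submodule.mem_span_singleton.1 hb
    have hr : ∀ r : ZMod 2, r = 0 ∨ r = 1 := by decide
    obtain rfl | rfl := hr r
    · rw [zero_smul, add_zero] at hne ⊢
      exact h.add_mem a ha hne u (hU' hu)
    · rw [one_smul, add_assoc, add_comm w]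
      exact hmem u hu a ha

lemma le_card_core_sdiff [Fintype V] {M : Finset V} {C W : Submodule (ZMod 2) V} {ε : ℝ}
    (hε : 0 ≤ ε) (hM : (1 - 1 / 2 ^ finrank (ZMod 2) C + ε) * Fintype.card V ≤ #M)
    (hW : 2 ^ finrank (ZMod 2) W ≤ ε / 2 * Fintype.card V) :
    ε / 2 * Fintype.card V ≤ #{y | (∀ a ∈ C, a + y ∈ M) ∧ y ∉ W} := by
  have hcore : (Fintype.card V : ℝ) ≤
      #{y | ∀ a ∈ C, a + y ∈ M} + 2 ^ finrank (ZMod 2) C * (Fintype.card V - #M) := by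
    have := card_le_card_filter_forall_add_mem {a | a ∈ C} M
    simp only [mem_filter_univ, card_filter_mem_submodule] at this
    rw [card_compl] at this
    have := (Nat.cast_le (α := ℝ)).2 this
    push_cast [card_le_univ M] at this
    exact this
  have hsdiff : (#{y | ∀ a ∈ C, a + y ∈ M} : ℝ) ≤
      #{y | (∀ a ∈ C, a + y ∈ M) ∧ y ∉ W} + 2 ^ finrank (ZMod 2) W := by
    rw [filter_and_not]
    have := card_le_card_sdiff_add_card (s := {y | ∀ a ∈ C, a + y ∈ M}) (t := {y | y ∈ W})
    rw [card_filter_mem_submodule] at this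
    exact_mod_cast this
  have hdefect : 2 ^ finrank (ZMod 2) C * (Fintype.card V - #M : ℝ) ≤
      (1 - ε) * Fintype.card V := calc
    _ ≤ (2 : ℝ) ^ finrank (ZMod 2) C * ((1 / 2 ^ finrank (ZMod 2) C - ε) * Fintype.card V) := by
      gcongr
      linarith
    _ = (1 - 2 ^ finrank (ZMod 2) C * ε) * Fintype.card V := by field_simp
    _ ≤ (1 - ε) * Fintype.card V := by
      gcongr
      exact le_mul_of_one_le_left hε (one_le_pow₀ one_le_two)
  linarith

-- The geometric Erdős–Stone theorem, with the omitted subspace `U` made to contain prescribed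
-- periods of `M`.
theorem exists_isBoseBurtonPair (c d t : ℕ) {ε : ℝ} (hε : 0 < ε) :
    ∃ n₀ : ℕ, ∀ (V : Type*) [AddCommGroup V] [Module (ZMod 2) V] [Fintype V]
      (M : Finset V) (D : Submodule (ZMod 2) V), n₀ ≤ finrank (ZMod 2) V →
      D ≤ periods M → finrank (ZMod 2) D = d → (1 - 2 / 2 ^ c + ε) * Fintype.card V ≤ #M →
      ∃ U C : Submodule (ZMod 2) V, D ≤ U ∧ finrank (ZMod 2) U = d + t ∧
        finrank (ZMod 2) C = c ∧ IsBoseBurtonPair M U C := by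
  induction c generalizing t with
  | zero =>
    obtain ⟨n₀, hn₀⟩ := exists_finrank_eq_add_mem d t one_pos
    refine ⟨n₀, fun V _ _ _ M D hV _ hD _ ↦ ?_⟩
    obtain ⟨U, hDU, -, hU, -⟩ := hn₀ V univ D ⊤ le_top
      (fun u _ ↦ mem_periods_iff_forall_add_mem.2 fun x _ ↦ mem_univ _) hD (by rwa [finrank_top])
      (by rw [one_mul, card_univ])
    exact ⟨U, ⊥, hDU, hU, finrank_bot _ _, isBoseBurtonPair_bot M U⟩
  | succ c ih =>
    obtain ⟨K, hK⟩ := exists_finrank_eq_add_mem d t (half_pos hε)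
    obtain ⟨n₀, hn₀⟩ := ih K
    obtain ⟨k, hk⟩ := exists_forall_two_pow_le_mul_two_pow (d + K + c) (half_pos hε)
    refine ⟨max n₀ k, fun V _ _ _ M D hV hDM hD hM ↦ ?_⟩
    obtain ⟨U, C, hDU, hU, hC, hUC⟩ := hn₀ V M D (by lia) hDM hD (le_trans (by gcongr <;> simp) hM)
    let A : Finset V := {y | (∀ a ∈ C, a + y ∈ M) ∧ y ∉ U ⊔ C}
    have hsup : (2 : ℝ) ^ finrank (ZMod 2) ↥(U ⊔ C) ≤ ε / 2 * Fintype.card V := calc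
      _ ≤ (2 : ℝ) ^ (d + K + c) := by
        gcongr
        · exact one_le_two
        · exact (Submodule.finrank_add_le_finrank_add_finrank U C).trans_eq (by rw [hU, hC])
      _ ≤ ε / 2 * 2 ^ finrank (ZMod 2) V := hk _ (by lia)
      _ = ε / 2 * Fintype.card V := by rw [card_eq_two_pow_finrank, Nat.cast_pow, Nat.cast_ofNat]
    have hhalf : (1 : ℝ) / 2 ^ c = 2 / 2 ^ (c + 1) := by rw [pow_succ]; field_simp
    have hA : ε / 2 * Fintype.card V ≤ #A :=
      le_card_core_sdiff hε.le (by rwa [hC, hhalf]) hsup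
    have hDA : D ≤ periods A := le_periods_filter hDM (hDU.trans le_sup_left)
    obtain ⟨D', hDD', hD'U, hD', w, hw⟩ := hK V A D U hDU hDA hD (by lia) hA
    simp only [A, mem_filter_univ] at hw
    have hwUC : w ∉ U ⊔ C := by simpa using (hw 0 (zero_mem _)).2
    exact ⟨D', C ⊔ Submodule.span (ZMod 2) {w}, hDD', hD',
      by rw [Submodule.finrank_sup_span_singleton fun h ↦ hwUC (Submodule.mem_sup_right h), hC],
      hUC.sup_span_singleton hD'U hwUC fun u hu ↦ (hw u hu).1⟩

end BinarySpaces

section LinearMaps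

lemma exists_linearEquiv_apply_eq {K V : Type*} [Field K] [AddCommGroup V] [Module K V] {v w : V}
    (hv : v ≠ 0) (hw : w ≠ 0) : ∃ g : V ≃ₗ[K] V, g v = w := by
  obtain ⟨g, hg⟩ := Submodule.exists_linearEquiv_restrict_eq
    (LinearEquiv.coord K V v hv ≪≫ₗ LinearEquiv.toSpanNonzeroSingleton K V w hw)
  refine ⟨g, (hg ⟨v, Submodule.mem_span_singleton_self v⟩).symm.trans ?_⟩
  simp [LinearEquiv.coord_self]

lemma exists_injective_linearMap_apply_eq {K V W : Type*} [Field K] [AddCommGroup V] [Module K V]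
    [AddCommGroup W] [Module K W] [FiniteDimensional K V] [FiniteDimensional K W]
    (h : finrank K V ≤ finrank K W) {v : V} {w : W} (hv : v ≠ 0) (hw : w ≠ 0) :
    ∃ f : V →ₗ[K] W, Function.Injective f ∧ f v = w := by
  obtain ⟨f, hf⟩ := (finrank_le_iff_exists_linearMap).1 h
  have hfv : f v ≠ 0 := (map_ne_zero_iff f hf).2 hv
  obtain ⟨g, hg⟩ := exists_linearEquiv_apply_eq (K := K) hfv hw
  exact ⟨g.toLinearMap ∘ₗ f, g.injective.comp hf, hg⟩

lemma exists_submodule_finrank_eq_s4 {K V : Type*} [Field K] [AddCommGroup V] [Module K V]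
    [FiniteDimensional K V] {k : ℕ} (hk : k ≤ finrank K V) :
    ∃ W : Submodule K V, finrank K W = k := by
  obtain ⟨f, hf⟩ := finrank_le_iff_exists_linearMap.1 ((finrank_fin_fun K (n := k)).trans_le hk)
  exact ⟨LinearMap.range f, (LinearMap.finrank_range_of_inj hf).trans (finrank_fin_fun K)⟩

end LinearMaps

section CriticalElement

variable {m : ℕ} {N : Set (Fin m → ZMod 2)} {V : Type*} [AddCommGroup V] [Module (ZMod 2) V]

lemma critNum_le_finrank_iff [FiniteDimensional (ZMod 2) V] (hN0 : 0 ∉ N) :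
    critNum N ≤ finrank (ZMod 2) V ↔
      ∃ φ : (Fin m → ZMod 2) →ₗ[ZMod 2] V, ∀ x ∈ N, φ x ≠ 0 := by
  constructor
  · intro h
    have hne : {c | ∃ φ : (Fin m → ZMod 2) →ₗ[ZMod 2] (Fin c → ZMod 2),
        ∀ x ∈ N, φ x ≠ 0}.Nonempty :=
      ⟨m, LinearMap.id, fun x hx hx0 ↦ hN0 (hx0 ▸ hx)⟩
    obtain ⟨φ, hφ⟩ := Nat.sInf_mem hne
    obtain ⟨f, hf⟩ := finrank_le_iff_exists_linearMap.1
      ((finrank_fin_fun (ZMod 2) (n := critNum N)).trans_le h)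
    exact ⟨f ∘ₗ φ, fun x hx ↦ (map_ne_zero_iff f hf).2 (hφ x hx)⟩
  · rintro ⟨φ, hφ⟩
    have e : V ≃ₗ[ZMod 2] (Fin (finrank (ZMod 2) V) → ZMod 2) :=
      LinearEquiv.ofFinrankEq _ _ (finrank_fin_fun _).symm
    exact Nat.sInf_le ⟨e.toLinearMap ∘ₗ φ, fun x hx ↦ e.map_ne_zero_iff.2 (hφ x hx)⟩

lemma hasRestriction_of_isBoseBurtonPair [Finite V] {M : Finset V} {U C : Submodule (ZMod 2) V}
    {e₀ : Fin m → ZMod 2} {e : V} (hN0 : 0 ∉ N) (he₀ : e₀ ∈ N)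
    (hdrop : critNum (N \ {e₀}) ≤ finrank (ZMod 2) C) (hC : finrank (ZMod 2) C < critNum N)
    (hU : m ≤ finrank (ZMod 2) U) (h : IsBoseBurtonPair M U C) (heM : e ∈ M) (heU : e ∈ U)
    (he0 : e ≠ 0) :
    HasRestriction N (M : Set V) := by
  obtain ⟨φ, hφ⟩ := (critNum_le_finrank_iff fun h0 ↦ hN0 h0.1).1 hdrop
  have hφe₀ : φ e₀ = 0 := by
    by_contra hne
    refine hC.not_ge ((critNum_le_finrank_iff hN0).2 ⟨φ, fun x hx ↦ ?_⟩)
    obtain rfl | hxe := eq_or_ne x e₀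
    exacts [hne, hφ x ⟨hx, hxe⟩]
  obtain ⟨α, hα, hαe₀⟩ := exists_injective_linearMap_apply_eq (v := e₀) (w := (⟨e, heU⟩ : U))
    ((finrank_fin_fun (ZMod 2)).trans_le hU) (fun h0 ↦ hN0 (h0 ▸ he₀)) (by simpa using he0)
  -- `φ` vanishes at `e₀`, so this map agrees there with `α`, which sends `e₀` to `e`; elsewhere on
  -- `N` it has a nonzero component in `C`.
  refine ⟨C.subtype ∘ₗ φ + U.subtype ∘ₗ α, ?_, ?_⟩
  · refine (injective_iff_map_eq_zero _).2 fun x hx ↦ (map_eq_zero_iff α hα).1 ?_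
    have hαx : (α x : V) = -φ x := (neg_eq_of_add_eq_zero_right hx).symm
    exact Subtype.ext <| Submodule.disjoint_def.1 h.disjoint _ (α x).2
      (hαx ▸ neg_mem (φ x).2)
  · rintro _ ⟨x, hx, rfl⟩
    obtain rfl | hxe := eq_or_ne x e₀
    · simpa [hφe₀, hαe₀] using heM
    · exact h.add_mem _ (φ x).2 (by simpa using hφ x ⟨hx, hxe⟩) _ (α x).2

lemma not_hasRestriction_compl [FiniteDimensional (ZMod 2) V] (hN0 : 0 ∉ N)
    {W : Submodule (ZMod 2) V}
    (hW : finrank (ZMod 2) V < critNum N + finrank (ZMod 2) W) :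
    ¬ HasRestriction N (W : Set V)ᶜ := by
  rintro ⟨ψ, -, hψ⟩
  have := (critNum_le_finrank_iff (V := V ⧸ W) hN0).2 ⟨W.mkQ ∘ₗ ψ, fun x hx h ↦
    hψ ⟨x, hx, rfl⟩ ((Submodule.Quotient.mk_eq_zero W).1 h)⟩
  have := W.finrank_quotient_add_finrank
  lia

lemma ncard_compl_submodule_s4 [Finite V] (W : Submodule (ZMod 2) V) :
    (W : Set V)ᶜ.ncard = 2 ^ finrank (ZMod 2) V - 2 ^ finrank (ZMod 2) W := by
  rw [Set.ncard_compl, Module.natCard_eq_pow_finrank (K := ZMod 2), ← Nat.card_coe_set_eq,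
    SetLike.coe_sort_coe, Module.natCard_eq_pow_finrank (K := ZMod 2) (V := W), Nat.card_zmod]

lemma setOf_ne_zero_and_notMem_eq_compl (W : Submodule (ZMod 2) V) :
    {x | x ≠ 0 ∧ x ∉ W} = (W : Set V)ᶜ :=
  Set.ext fun _ ↦ ⟨And.right, fun hx ↦ ⟨fun h0 ↦ hx (h0 ▸ W.zero_mem), hx⟩⟩

lemma exists_card_inter_vadd_lt {e₀ : Fin m → ZMod 2} (hN0 : 0 ∉ N) (he₀ : e₀ ∈ N)
    (hdrop : critNum (N \ {e₀}) < critNum N) {ε : ℝ} (hε : 0 < ε) :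
    ∃ n₀ : ℕ, ∀ (V : Type*) [AddCommGroup V] [Module (ZMod 2) V] [Fintype V] (M : Finset V),
      n₀ ≤ finrank (ZMod 2) V → 0 ∉ M → ¬ HasRestriction N (M : Set V) → ∀ e ∈ M,
      (#(M ∩ (e +ᵥ M)) : ℝ) < (1 - 2 / 2 ^ (critNum N - 1) + ε) * Fintype.card V := by
  obtain ⟨n₀, hn₀⟩ := exists_isBoseBurtonPair (critNum N - 1) 1 m hε
  refine ⟨n₀, fun V _ _ _ M hV hM0 hfree e he ↦ lt_of_not_ge fun hdense ↦ hfree ?_⟩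
  have he0 : e ≠ 0 := ne_of_mem_of_not_mem he hM0
  obtain ⟨U, C, heU, hU, hC, hUC⟩ := hn₀ V (M ∩ (e +ᵥ M)) (Submodule.span (ZMod 2) {e}) hV
    ((Submodule.span_singleton_le_iff_mem _ _).2 (mem_periods_inter_vadd M e))
    (finrank_span_singleton he0) hdense
  exact hasRestriction_of_isBoseBurtonPair hN0 he₀ (by lia) (by lia) (by lia)
    (hUC.mono inter_subset_left) he ((Submodule.span_singleton_le_iff_mem _ _).1 heU) he0

lemma exists_card_compl_inter_vadd_compl_lt {e₀ : Fin m → ZMod 2} (hN0 : 0 ∉ N) (he₀ : e₀ ∈ N)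
    (hdrop : critNum (N \ {e₀}) < critNum N) {δ : ℝ} (hδ : 0 < δ) :
    ∃ n₀ : ℕ, ∀ (V : Type*) [AddCommGroup V] [Module (ZMod 2) V] [Fintype V] (M : Finset V),
      n₀ ≤ finrank (ZMod 2) V → 0 ∉ M → ¬ HasRestriction N (M : Set V) → ∀ e ∈ M,
      (#(Mᶜ ∩ (e +ᵥ Mᶜ)) : ℝ) <
        2 * #Mᶜ - (2 - δ) * 2 ^ (finrank (ZMod 2) V - critNum N + 1) := by
  obtain ⟨n₀, hn₀⟩ := exists_card_inter_vadd_lt hN0 he₀ hdrop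
    (ε := δ / 2 ^ (critNum N - 1)) (by positivity)
  refine ⟨max n₀ (critNum N), fun V _ _ _ M hV hM0 hfree e he ↦ ?_⟩
  have hlt := hn₀ V M (by lia) hM0 hfree e he
  have hcompl : (#(M ∩ (e +ᵥ M)) : ℝ) + 2 * #Mᶜ =
      Fintype.card V + #(Mᶜ ∩ (e +ᵥ Mᶜ)) := by
    have := card_compl_inter_vadd_compl Mᶜ e
    rw [compl_compl] at this
    exact_mod_cast this
  have hcard : Fintype.card V =
      2 ^ (critNum N - 1) * 2 ^ (finrank (ZMod 2) V - critNum N + 1) := by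
    rw [card_eq_two_pow_finrank, ← pow_add]
    congr 1
    lia
  have hbound : (1 - 2 / 2 ^ (critNum N - 1) + δ / 2 ^ (critNum N - 1)) * (Fintype.card V : ℝ) =
      Fintype.card V - (2 - δ) * 2 ^ (finrank (ZMod 2) V - critNum N + 1) := by
    rw [hcard]
    push_cast
    field_simp
    ring
  linarith

lemma exists_compl_eq_of_le_ncard {e₀ : Fin m → ZMod 2} (hN0 : 0 ∉ N) (he₀ : e₀ ∈ N)
    (hdrop : critNum (N \ {e₀}) < critNum N) :
    ∃ n₀ : ℕ, ∀ (V : Type*) [AddCommGroup V] [Module (ZMod 2) V] [Finite V] (M : Set V),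
      n₀ ≤ finrank (ZMod 2) V → 0 ∉ M → ¬ HasRestriction N M →
      2 ^ finrank (ZMod 2) V - 2 ^ (finrank (ZMod 2) V - critNum N + 1) ≤ M.ncard →
      ∃ W : Submodule (ZMod 2) V, finrank (ZMod 2) W = finrank (ZMod 2) V - critNum N + 1 ∧
        (W : Set V)ᶜ = M := by
  obtain ⟨n₀, hn₀⟩ := exists_card_compl_inter_vadd_compl_lt hN0 he₀ hdrop
    (δ := 1 / (32 * 2 ^ (critNum N - 1))) (by positivity)
  refine ⟨max n₀ (critNum N), fun V _ _ _ M hV hM0 hfree hM ↦ ?_⟩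
  have := Fintype.ofFinite V
  obtain ⟨M, rfl⟩ := M.toFinite.exists_finset_coe
  rw [Set.ncard_coe_finset, ← card_eq_two_pow_finrank] at hM
  obtain ⟨W, hW, hWM⟩ := exists_submodule_coe_eq_of_card_inter_vadd_lt (A := Mᶜ)
    (c := critNum N - 1) (k := finrank (ZMod 2) V - critNum N + 1) (by lia)
    (by rw [card_compl]; lia)
    fun x hx ↦ hn₀ V M (by lia) hM0 hfree x (by simpa using hx)
  exact ⟨W, hW, by rw [hWM, coe_compl, compl_compl]⟩

end CriticalElement

/-- Critical element theorem: exact Turán numbers when deleting an element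
drops the critical number. -/
theorem critical_element {m : ℕ} (N : Set (Fin m → ZMod 2)) (hN0 : 0 ∉ N)
    (hχ : 2 ≤ critNum N) (e : Fin m → ZMod 2) (he : e ∈ N)
    (hdrop : critNum (N \ {e}) < critNum N) :
    ∃ n₀ : ℕ, ∀ n ≥ n₀,
      exNum N n = 2 ^ n - 2 ^ (n - critNum N + 1) ∧
      ∀ M : Set (Fin n → ZMod 2), 0 ∉ M → ¬ HasRestriction N M →
        M.ncard = 2 ^ n - 2 ^ (n - critNum N + 1) →
        ∃ W : Submodule (ZMod 2) (Fin n → ZMod 2),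
          Module.finrank (ZMod 2) W = n - critNum N + 1 ∧
          M = {x : Fin n → ZMod 2 | x ≠ 0 ∧ x ∉ W} := by
  obtain ⟨n₀, hn₀⟩ := exists_compl_eq_of_le_ncard hN0 he hdrop
  refine ⟨max n₀ (critNum N), fun n hn ↦ ?_⟩
  have hstructure := hn₀ (Fin n → ZMod 2)
  rw [finrank_fin_fun] at hstructure
  refine ⟨IsGreatest.csSup_eq ⟨?_, ?_⟩, fun M hM0 hfree hM ↦ ?_⟩
  · obtain ⟨W, hW⟩ := exists_submodule_finrank_eq_s4 (K := ZMod 2) (V := Fin n → ZMod 2)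
      (k := n - critNum N + 1) (by rw [finrank_fin_fun]; lia)
    exact ⟨(W : Set (Fin n → ZMod 2))ᶜ, fun h ↦ h W.zero_mem,
      not_hasRestriction_compl hN0 (by rw [finrank_fin_fun]; lia),
      by rw [ncard_compl_submodule_s4, hW, finrank_fin_fun]⟩
  · rintro _ ⟨M, hM0, hfree, rfl⟩
    by_contra! hlt
    obtain ⟨W, hW, rfl⟩ := hstructure M (by lia) hM0 hfree hlt.le
    rw [ncard_compl_submodule_s4, hW, finrank_fin_fun] at hlt
    exact hlt.false
  · obtain ⟨W, hW, rfl⟩ := hstructure M (by lia) hM0 hfree hM.ge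
    exact ⟨W, hW, (setOf_ne_zero_and_notMem_eq_compl W).symm⟩
end
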